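/- arXiv:2512.23534 — 3 statements merged into one kernel-verified Lean document; each statement's English description precedes it below -/
import Mathlib

section
/- The sum over all primes p of (log p)/(p^{1/2}·(p−1)) converges and is strictly less than 1.7215. -/
open Finset Filter Topology

theorem ConvexOn.two_mul_mul_le_sub {f G : ℝ → ℝ} {a h : ℝ} (hh : 0 ≤ h)
    (hf : ConvexOn ℝ (Set.Icc (a - h) (a + h)) f)
    (hG : ∀ x ∈ Set.Icc (a - h) (a + h), HasDerivAt G (-f x) x) :
    2 * h * f a ≤ G (a - h) - G (a + h) := by
  have hderiv : ∀ t ∈ Set.Icc 0 h, HasDerivAt (fun t ↦ G (a - t) - G (a + t) - 2 * t * f a)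
      (f (a - t) + f (a + t) - 2 * f a) t := by
    intro t ht
    have h₁ := (hG (a - t) ⟨by linarith [ht.2], by linarith [ht.1, ht.2]⟩).comp t
      ((hasDerivAt_id t).const_sub a)
    have h₂ := (hG (a + t) ⟨by linarith [ht.1, ht.2], by linarith [ht.2]⟩).comp t
      ((hasDerivAt_id t).const_add a)
    have h₃ := ((hasDerivAt_id t).const_mul 2).mul_const (f a)
    convert! (h₁.sub h₂).sub h₃ using 1
    ring
  have hmono : MonotoneOn (fun t ↦ G (a - t) - G (a + t) - 2 * t * f a) (Set.Icc 0 h) := by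
    refine monotoneOn_of_hasDerivWithinAt_nonneg (convex_Icc 0 h)
      (fun t ht ↦ (hderiv t ht).continuousAt.continuousWithinAt)
      (fun t ht ↦ (hderiv t (interior_subset ht)).hasDerivWithinAt) fun t ht ↦ ?_
    have ht := interior_subset ht
    have hl : a - t ∈ Set.Icc (a - h) (a + h) := ⟨by linarith [ht.2], by linarith [ht.1, ht.2]⟩
    have hr : a + t ∈ Set.Icc (a - h) (a + h) := ⟨by linarith [ht.1, ht.2], by linarith [ht.2]⟩
    have := hf.2 hl hr (show (0 : ℝ) ≤ 1 / 2 by norm_num) (show (0 : ℝ) ≤ 1 / 2 by norm_num)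
      (by norm_num)
    simp only [smul_eq_mul] at this
    rw [show 1 / 2 * (a - t) + 1 / 2 * (a + t) = a by ring] at this
    linarith
  have := hmono ⟨le_rfl, hh⟩ ⟨hh, le_rfl⟩ hh
  simp at this
  linarith

theorem ConvexOn.sub_le_mul_add_div_two {f G : ℝ → ℝ} {a h : ℝ} (hh : 0 < h)
    (hf : ConvexOn ℝ (Set.Icc a (a + h)) f)
    (hG : ∀ x ∈ Set.Icc a (a + h), HasDerivAt G (-f x) x) :
    G a - G (a + h) ≤ h * (f a + f (a + h)) / 2 := by
  have hderiv : ∀ t ∈ Set.Icc 0 h, HasDerivAt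
      (fun t ↦ G (a + t) + (t * f a + t ^ 2 * ((f (a + h) - f a) / (2 * h))))
      (-f (a + t) + (f a + t * ((f (a + h) - f a) / h))) t := by
    intro t ht
    have h₂ := (hG (a + t) ⟨by linarith [ht.1], by linarith [ht.2]⟩).comp t
      ((hasDerivAt_id t).const_add a)
    have h₃ := ((hasDerivAt_id t).mul_const (f a)).add
      (((hasDerivAt_id t).pow 2).mul_const ((f (a + h) - f a) / (2 * h)))
    convert! h₂.add h₃ using 1
    simp
    field_simp
  have hmono : MonotoneOn
      (fun t ↦ G (a + t) + (t * f a + t ^ 2 * ((f (a + h) - f a) / (2 * h)))) (Set.Icc 0 h) := by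
    refine monotoneOn_of_hasDerivWithinAt_nonneg (convex_Icc 0 h)
      (fun t ht ↦ (hderiv t ht).continuousAt.continuousWithinAt)
      (fun t ht ↦ (hderiv t (interior_subset ht)).hasDerivWithinAt) fun t ht ↦ ?_
    have ht := interior_subset ht
    have hl : 0 ≤ 1 - t / h := by rw [sub_nonneg, div_le_one hh]; exact ht.2
    have := hf.2 (Set.left_mem_Icc.2 (by linarith)) (Set.right_mem_Icc.2 (by linarith)) hl
      (div_nonneg ht.1 hh.le) (by ring)
    simp only [smul_eq_mul] at this
    rw [show (1 - t / h) * a + t / h * (a + h) = a + t by field_simp; ring] at this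
    have e : (1 - t / h) * f a + t / h * f (a + h) = f a + t * ((f (a + h) - f a) / h) := by ring
    linarith
  have := hmono ⟨le_rfl, hh.le⟩ ⟨hh.le, le_rfl⟩ hh.le
  simp at this
  have e : h ^ 2 * ((f (a + h) - f a) / (2 * h)) = h * (f (a + h) - f a) / 2 := by field_simp
  linarith

theorem convexOn_rpow_neg {s : ℝ} (hs : 0 < s) : ConvexOn ℝ (Set.Ioi 0) fun x : ℝ ↦ x ^ (-s) := by
  refine convexOn_of_hasDerivWithinAt2_nonneg (convex_Ioi 0) (f' := fun x ↦ -s * x ^ (-s - 1))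
    (f'' := fun x ↦ -s * ((-s - 1) * x ^ (-s - 1 - 1))) ?_ ?_ ?_ ?_
  · exact fun x hx ↦ (Real.continuousAt_rpow_const x _ (.inl (ne_of_gt hx))).continuousWithinAt
  · intro x hx
    rw [interior_Ioi] at hx
    exact (Real.hasDerivAt_rpow_const (.inl (ne_of_gt hx))).hasDerivWithinAt
  · intro x hx
    rw [interior_Ioi] at hx
    exact ((Real.hasDerivAt_rpow_const (.inl (ne_of_gt hx))).const_mul _).hasDerivWithinAt
  · intro x hx
    rw [interior_Ioi] at hx
    have : 0 < x ^ (-s - 1 - 1) := Real.rpow_pos_of_pos hx _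
    have : 0 ≤ s * (s + 1) * x ^ (-s - 1 - 1) := by positivity
    linarith

theorem hasDerivAt_log_mul_rpow {x r : ℝ} (hx : 0 < x) :
    HasDerivAt (fun x ↦ Real.log x * x ^ r) ((1 + r * Real.log x) * x ^ (r - 1)) x := by
  convert! (Real.hasDerivAt_log hx.ne').mul (Real.hasDerivAt_rpow_const (.inl hx.ne')) using 1
  rw [Real.rpow_sub_one hx.ne']
  field_simp

theorem convexOn_log_mul_rpow_neg {s : ℝ} (hs : 1 ≤ s) :
    ConvexOn ℝ (Set.Ici (Real.exp (3 / 2))) fun x : ℝ ↦ Real.log x * x ^ (-s) := by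
  have pos {x : ℝ} (hx : Real.exp (3 / 2) ≤ x) : 0 < x := (Real.exp_pos _).trans_le hx
  refine convexOn_of_hasDerivWithinAt2_nonneg (convex_Ici _)
    (f' := fun x ↦ (1 + -s * Real.log x) * x ^ (-s - 1))
    (f'' := fun x ↦ (s * (s + 1) * Real.log x - (2 * s + 1)) * x ^ (-s - 1 - 1)) ?_ ?_ ?_ ?_
  · exact fun x hx ↦ (hasDerivAt_log_mul_rpow (pos hx)).continuousAt.continuousWithinAt
  · exact fun x hx ↦ (hasDerivAt_log_mul_rpow (pos (interior_subset hx))).hasDerivWithinAt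
  · intro x hx
    have hx := pos (interior_subset hx)
    have h := (Real.hasDerivAt_rpow_const (p := -s - 1) (.inl hx.ne')).add
      ((hasDerivAt_log_mul_rpow (r := -s - 1) hx).const_mul (-s))
    refine HasDerivAt.hasDerivWithinAt ?_
    convert! h using 1
    · ext y
      simp only [Pi.add_apply]
      ring
    · ring
  · intro x hx
    have hx := interior_subset hx
    have hlog : 3 / 2 ≤ Real.log x := (Real.le_log_iff_exp_le (pos hx)).2 hx
    have := Real.rpow_pos_of_pos (pos hx) (-s - 1 - 1)
    refine mul_nonneg ?_ this.le
    nlinarith [mul_nonneg (by nlinarith : 0 ≤ s * (s + 1)) (sub_nonneg.2 hlog)]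

/-- An antiderivative of `-x ^ (-s)`. -/
theorem hasDerivAt_rpow_one_sub_div {s x : ℝ} (hs : 1 < s) (hx : 0 < x) :
    HasDerivAt (fun x ↦ x ^ (1 - s) / (s - 1)) (-x ^ (-s)) x := by
  have h := (Real.hasDerivAt_rpow_const (p := 1 - s) (.inl hx.ne')).div_const (s - 1)
  convert! h using 1
  have : s - 1 ≠ 0 := by linarith
  rw [show 1 - s - 1 = -s by ring]
  field_simp
  ring

/-- An antiderivative of `-log x * x ^ (-s)`. -/
theorem hasDerivAt_log_mul_rpow_one_sub {s x : ℝ} (hs : 1 < s) (hx : 0 < x) :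
    HasDerivAt (fun x ↦ ((s - 1) * Real.log x + 1) * x ^ (1 - s) / (s - 1) ^ 2)
      (-(Real.log x * x ^ (-s))) x := by
  have h := ((((Real.hasDerivAt_log hx.ne').const_mul (s - 1)).add_const 1).mul
    (Real.hasDerivAt_rpow_const (p := 1 - s) (.inl hx.ne'))).div_const ((s - 1) ^ 2)
  convert! h using 1
  have : s - 1 ≠ 0 := by linarith
  rw [show 1 - s - 1 = -s by ring, show 1 - s = -s + 1 by ring, Real.rpow_add_one hx.ne']
  field_simp
  ring

theorem sum_le_tsum_of_telescope {f h : ℕ → ℝ} (hf : Summable f) (N : ℕ)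
    (hle : ∀ n, h n - h (n + 1) ≤ f (N + n)) (hlim : Tendsto h atTop (𝓝 0)) :
    ∑ n ∈ range N, f n + h 0 ≤ ∑' n, f n := by
  rw [← hf.sum_add_tsum_nat_add N]
  gcongr
  have hs := ((summable_nat_add_iff N).2 hf).hasSum.tendsto_sum_nat
  have hl := hlim.const_sub (h 0)
  rw [sub_zero] at hl
  refine le_of_tendsto_of_tendsto' hl hs fun M ↦ ?_
  rw [← sum_range_sub']
  exact sum_le_sum fun n _ ↦ by simpa [add_comm] using hle n

theorem summable_and_tsum_le_of_telescope {f h : ℕ → ℝ} (N : ℕ) (hf : ∀ n, 0 ≤ f n)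
    (hle : ∀ n, f (N + n) ≤ h n - h (n + 1)) (hh : ∀ n, 0 ≤ h n) :
    Summable f ∧ ∑' n, f n ≤ ∑ n ∈ range N, f n + h 0 := by
  have key (M : ℕ) : ∑ n ∈ range M, f (n + N) ≤ h 0 := by
    calc _ ≤ ∑ n ∈ range M, (h n - h (n + 1)) :=
          sum_le_sum fun n _ ↦ by simpa [add_comm] using hle n
      _ ≤ h 0 := by rw [sum_range_sub']; linarith [hh M]
  have hs : Summable fun n ↦ f (n + N) := summable_of_sum_range_le (fun n ↦ hf _) key
  have hs' := (summable_nat_add_iff N).1 hs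
  refine ⟨hs', ?_⟩
  rw [← hs'.sum_add_tsum_nat_add N]
  gcongr
  exact Real.tsum_le_of_sum_range_le (fun n ↦ hf _) key

theorem le_tsum_rpow_neg {s : ℝ} (hs : 1 < s) (N : ℕ) :
    ∑ n ∈ range N, ((n : ℝ) + 1) ^ (-s) +
      (((N : ℝ) + 1) ^ (1 - s) / (s - 1) + ((N : ℝ) + 1) ^ (-s) / 2) ≤
      ∑' n : ℕ, ((n : ℝ) + 1) ^ (-s) := by
  have hsum : Summable fun n : ℕ ↦ ((n : ℝ) + 1) ^ (-s) := by
    simpa using (summable_nat_add_iff 1).2 (Real.summable_nat_rpow.2 (show -s < -1 by linarith))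
  have hcast : Tendsto (fun n : ℕ ↦ (N : ℝ) + n + 1) atTop atTop :=
    tendsto_atTop_add_const_right _ _
      (tendsto_atTop_add_const_left _ _ tendsto_natCast_atTop_atTop)
  have h := sum_le_tsum_of_telescope hsum N
    (h := fun n ↦ ((N : ℝ) + n + 1) ^ (1 - s) / (s - 1) + ((N : ℝ) + n + 1) ^ (-s) / 2) ?_ ?_
  · simpa using h
  · intro n
    have hpos : (0 : ℝ) < N + n + 1 := by positivity
    have := ConvexOn.sub_le_mul_add_div_two (a := (N : ℝ) + n + 1) one_pos
      ((convexOn_rpow_neg (s := s) (by linarith)).subset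
        (fun x hx ↦ hpos.trans_le hx.1) (convex_Icc _ _))
      fun x hx ↦ hasDerivAt_rpow_one_sub_div hs (hpos.trans_le hx.1)
    push_cast
    rw [← add_assoc (N : ℝ) n 1]
    linarith
  · have h₁ := ((tendsto_rpow_neg_atTop (show 0 < s - 1 by linarith)).comp hcast).div_const (s - 1)
    have h₂ := ((tendsto_rpow_neg_atTop (show 0 < s by linarith)).comp hcast).div_const 2
    simpa [Function.comp_def] using h₁.add h₂

theorem summable_and_tsum_log_mul_rpow_neg_le {s : ℝ} (hs : 1 < s) {N : ℕ} (hN : 5 ≤ N) :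
    Summable (fun n : ℕ ↦ Real.log ((n : ℝ) + 1) * ((n : ℝ) + 1) ^ (-s)) ∧
    ∑' n : ℕ, Real.log ((n : ℝ) + 1) * ((n : ℝ) + 1) ^ (-s) ≤
      ∑ n ∈ range N, Real.log ((n : ℝ) + 1) * ((n : ℝ) + 1) ^ (-s) +
        ((s - 1) * Real.log (N + 1 / 2) + 1) * ((N : ℝ) + 1 / 2) ^ (1 - s) / (s - 1) ^ 2 := by
  have hN' : (5 : ℝ) ≤ N := mod_cast hN
  have hexp : Real.exp (3 / 2) ≤ 5 := by
    have h := Real.exp_one_lt_d9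
    have h2 : Real.exp (3 / 2) ^ 2 = Real.exp 1 ^ 3 := by
      rw [← Real.exp_nat_mul, ← Real.exp_nat_mul]; norm_num
    have h3 : Real.exp 1 ^ 3 ≤ 2.7182818286 ^ 3 := by gcongr
    exact le_of_sq_le_sq (by rw [h2]; exact h3.trans (by norm_num)) (by norm_num)
  have h := summable_and_tsum_le_of_telescope
    (f := fun n : ℕ ↦ Real.log ((n : ℝ) + 1) * ((n : ℝ) + 1) ^ (-s)) N
    (h := fun n ↦ ((s - 1) * Real.log (N + n + 1 / 2) + 1) * ((N : ℝ) + n + 1 / 2) ^ (1 - s)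
      / (s - 1) ^ 2) ?_ ?_ ?_
  · simpa using h
  · intro n
    have : 0 ≤ Real.log ((n : ℝ) + 1) := Real.log_nonneg (by linarith [n.cast_nonneg (α := ℝ)])
    positivity
  · intro n
    have hn := n.cast_nonneg (α := ℝ)
    have := ConvexOn.two_mul_mul_le_sub (a := (N : ℝ) + n + 1) (h := 1 / 2) (by norm_num)
      ((convexOn_log_mul_rpow_neg hs.le).subset (fun x hx ↦ hexp.trans (by linarith [hx.1]))
        (convex_Icc _ _))
      fun x hx ↦ hasDerivAt_log_mul_rpow_one_sub hs (by linarith [hx.1])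
    rw [show (N : ℝ) + n + 1 - 1 / 2 = N + n + 1 / 2 by ring,
      show (N : ℝ) + n + 1 + 1 / 2 = N + (n + 1 : ℕ) + 1 / 2 by push_cast; ring] at this
    simpa using this
  · intro n
    have hn := n.cast_nonneg (α := ℝ)
    have : 0 ≤ Real.log ((N : ℝ) + n + 1 / 2) := Real.log_nonneg (by linarith)
    have : 0 ≤ s - 1 := by linarith
    positivity

theorem LSeries.term_ofReal {f : ℕ → ℝ} (hf : f 0 = 0) (s : ℝ) (n : ℕ) :
    LSeries.term (fun n ↦ (f n : ℂ)) s n = ((f n * (n : ℝ) ^ (-s) : ℝ) : ℂ) := by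
  rcases eq_or_ne n 0 with rfl | hn
  · simp [hf]
  · rw [LSeries.term_of_ne_zero hn, Real.rpow_neg n.cast_nonneg, ← div_eq_mul_inv]
    push_cast
    rw [Complex.ofReal_cpow n.cast_nonneg]
    simp

theorem summable_vonMangoldt_mul_rpow_neg {s : ℝ} (hs : 1 < s) :
    Summable fun n : ℕ ↦ ArithmeticFunction.vonMangoldt n * (n : ℝ) ^ (-s) := by
  have h := ArithmeticFunction.LSeriesSummable_vonMangoldt (s := s) (by simpa using hs)
  rw [LSeriesSummable, funext (LSeries.term_ofReal (by simp) s)] at h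
  exact Complex.summable_ofReal.1 h

theorem tsum_vonMangoldt_mul_tsum {s : ℝ} (hs : 1 < s) :
    (∑' n : ℕ, ArithmeticFunction.vonMangoldt n * (n : ℝ) ^ (-s)) *
      ∑' n : ℕ, ((n : ℝ) + 1) ^ (-s) =
      ∑' n : ℕ, Real.log ((n : ℝ) + 1) * ((n : ℝ) + 1) ^ (-s) := by
  have hs' : 1 < (s : ℂ).re := by simpa using hs
  have hΛ := ArithmeticFunction.LSeriesSummable_vonMangoldt hs'
  have hζ := ArithmeticFunction.LSeriesSummable_zeta_iff.2 hs'
  have hlog := hΛ.convolution hζ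
  have h := LSeries_convolution' hΛ hζ
  rw [ArithmeticFunction.convolution_vonMangoldt_zeta] at h hlog
  have e₁ : (fun n : ℕ ↦ Complex.log n) = fun n : ℕ ↦ ((Real.log n : ℝ) : ℂ) := by
    ext n; exact (Complex.natCast_log).symm
  have e₂ : (fun n : ℕ ↦ ((ArithmeticFunction.zeta n : ℕ) : ℂ)) =
      fun n : ℕ ↦ (((ArithmeticFunction.zeta n : ℕ) : ℝ) : ℂ) := by
    ext n; norm_cast
  rw [e₁] at h hlog
  rw [e₂] at h hζ
  simp only [LSeries, LSeriesSummable] at h hlog hζ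
  rw [funext (LSeries.term_ofReal (by simp) s)] at hlog hζ
  rw [funext (LSeries.term_ofReal (by simp) s), funext (LSeries.term_ofReal (by simp) s),
    funext (LSeries.term_ofReal (by simp) s), ← Complex.ofReal_tsum, ← Complex.ofReal_tsum,
    ← Complex.ofReal_tsum, ← Complex.ofReal_mul] at h
  have h := (Complex.ofReal_injective h).symm
  rw [(Complex.summable_ofReal.1 hζ).tsum_eq_zero_add,
    (Complex.summable_ofReal.1 hlog).tsum_eq_zero_add] at h
  simpa using h

theorem summable_and_tsum_log_div_rpow_sub_one_le {s : ℝ} (hs : 1 < s) :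
    Summable (fun p : Nat.Primes ↦ Real.log (p : ℕ) / (((p : ℕ) : ℝ) ^ s - 1)) ∧
    ∑' p : Nat.Primes, Real.log (p : ℕ) / (((p : ℕ) : ℝ) ^ s - 1) ≤
      ∑' n : ℕ, ArithmeticFunction.vonMangoldt n * (n : ℝ) ^ (-s) := by
  have hΛ := summable_vonMangoldt_mul_rpow_neg hs
  have hinj : Function.Injective fun pk : Nat.Primes × ℕ ↦ (Nat.Primes.prodNatEquiv pk : ℕ) :=
    Subtype.val_injective.comp Nat.Primes.prodNatEquiv.injective
  have hsum := hΛ.comp_injective hinj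
  have hgeom (p : Nat.Primes) : HasSum (fun k : ℕ ↦
      ((fun n : ℕ ↦ ArithmeticFunction.vonMangoldt n * (n : ℝ) ^ (-s)) ∘
        fun pk : Nat.Primes × ℕ ↦ (Nat.Primes.prodNatEquiv pk : ℕ)) (p, k))
      (Real.log (p : ℕ) / (((p : ℕ) : ℝ) ^ s - 1)) := by
    have hp : (1 : ℝ) < (p : ℕ) := mod_cast p.2.one_lt
    have h₁ : 1 < ((p : ℕ) : ℝ) ^ s := Real.one_lt_rpow hp (by linarith)
    have h := (hasSum_geometric_of_lt_one (r := (((p : ℕ) : ℝ) ^ s)⁻¹) (by positivity)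
      (inv_lt_one_of_one_lt₀ h₁)).mul_left (Real.log (p : ℕ) * (((p : ℕ) : ℝ) ^ s)⁻¹)
    convert! h using 1
    · ext k
      simp only [Function.comp_apply, Nat.Primes.coe_prodNatEquiv_apply,
        ArithmeticFunction.vonMangoldt_apply_pow k.succ_ne_zero,
        ArithmeticFunction.vonMangoldt_apply_prime p.2]
      rw [mul_assoc, ← pow_succ', Real.rpow_neg (by positivity), Nat.cast_pow, inv_pow,
        ← Real.rpow_natCast, ← Real.rpow_natCast, ← Real.rpow_mul (by positivity),
        ← Real.rpow_mul (by positivity), mul_comm s]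
    · have : ((p : ℕ) : ℝ) ^ s - 1 ≠ 0 := by linarith
      field_simp
  have hfiber (p : Nat.Primes) := (hgeom p).tsum_eq
  refine ⟨?_, ?_⟩
  · simpa only [hfiber] using hsum.prod
  · simp only [← hfiber]
    rw [← hsum.tsum_prod]
    exact tsum_comp_le_tsum_of_inj hΛ (fun n ↦ mul_nonneg ArithmeticFunction.vonMangoldt_nonneg
      (by positivity)) hinj

/-- A rational lower bound for `√n`. -/
def sqrtLower (n : ℕ) : ℚ := (Nat.sqrt (n * 10 ^ 20) : ℚ) / 10 ^ 10

/-- A rational upper bound for `√n`. -/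
def sqrtUpper (n : ℕ) : ℚ := ((Nat.sqrt (n * 10 ^ 20) : ℚ) + 1) / 10 ^ 10

/-- A partial sum of the power series of `artanh`. -/
def artanhSum (z : ℚ) : ℚ := ∑ i ∈ range 8, z ^ (2 * i + 1) / (2 * i + 1)

/-- The `z` with `n = 2 ^ Nat.log2 n * ((1 + z) / (1 - z))`. -/
def logArg (n : ℕ) : ℚ := (n - 2 ^ Nat.log2 n) / (n + 2 ^ Nat.log2 n)

/-- A rational lower bound for `log n`. -/
def logLower (n : ℕ) : ℚ :=
  Nat.log2 n * (6931471803 / 10 ^ 10) + 2 * artanhSum (logArg n)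

/-- A rational upper bound for `log n`. -/
def logUpper (n : ℕ) : ℚ :=
  Nat.log2 n * (6931471808 / 10 ^ 10) +
    2 * (artanhSum (logArg n) + logArg n ^ 17 / (1 - logArg n ^ 2))

/-- A rational lower bound for `n ^ (-(j + 1 / 2))`. -/
def rpowLower (j n : ℕ) : ℚ := 1 / (n ^ j * sqrtUpper n)

/-- A rational upper bound for `n ^ (-(j + 1 / 2))`. -/
def rpowUpper (j n : ℕ) : ℚ := 1 / (n ^ j * sqrtLower n)

/-- A rational lower bound for `ζ(j + 1 / 2)`. -/
def zetaLower (j N : ℕ) : ℚ :=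
  ∑ n ∈ range N, rpowLower j (n + 1) +
    rpowLower j (N + 1) * ((N + 1) / (j - 1 / 2) + 1 / 2)

/-- A rational upper bound for `∑ log n * n ^ (-(j + 1 / 2))`. -/
def negDerivZetaUpper (j N : ℕ) : ℚ :=
  ∑ n ∈ range N, logUpper (n + 1) * rpowUpper j (n + 1) +
    ((j - 1 / 2) * (logUpper (2 * N + 1) - logLower 2) + 1) *
      ((N + 1 / 2) * (rpowUpper j (2 * N + 1) / rpowLower j 2)) / (j - 1 / 2) ^ 2

/-- A rational lower bound for
`log n * (1 / (n ^ (3 / 2) - 1) + 1 / (n ^ (5 / 2) - 1) - 1 / (√n * (n - 1)))`. -/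
def gapLower (n : ℕ) : ℚ :=
  logLower n * (1 / (n * sqrtUpper n - 1) + 1 / (n ^ 2 * sqrtUpper n - 1) -
    1 / (sqrtLower n * (n - 1)))

theorem sqrt_mul_ten_pow (n : ℕ) : √((n * 10 ^ 20 : ℕ) : ℝ) = √n * 10 ^ 10 := by
  rw [Nat.cast_mul, Real.sqrt_mul n.cast_nonneg,
    show ((10 ^ 20 : ℕ) : ℝ) = (10 ^ 10) ^ 2 by norm_num, Real.sqrt_sq (by positivity)]

theorem sqrtLower_le (n : ℕ) : (sqrtLower n : ℝ) ≤ √n := by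
  have h := Real.nat_sqrt_le_real_sqrt (a := n * 10 ^ 20)
  rw [sqrt_mul_ten_pow] at h
  rw [sqrtLower]
  push_cast
  rwa [div_le_iff₀ (by positivity)]

theorem le_sqrtUpper (n : ℕ) : √n ≤ (sqrtUpper n : ℝ) := by
  have h := (Real.real_sqrt_lt_nat_sqrt_succ (a := n * 10 ^ 20)).le
  rw [sqrt_mul_ten_pow] at h
  rw [sqrtUpper]
  push_cast
  rwa [le_div_iff₀ (by positivity)]

theorem sqrtLower_pos {n : ℕ} (hn : 0 < n) : 0 < (sqrtLower n : ℝ) := by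
  have : 0 < Nat.sqrt (n * 10 ^ 20) := Nat.sqrt_pos.2 (by positivity)
  rw [sqrtLower]
  push_cast
  positivity

theorem log_eq_log2_mul_add {n : ℕ} (hn : 0 < n) :
    0 ≤ (logArg n : ℝ) ∧ (logArg n : ℝ) < 1 ∧
    Real.log n = Nat.log2 n * Real.log 2 +
      2 * (1 / 2 * Real.log ((1 + (logArg n : ℝ)) / (1 - (logArg n : ℝ)))) := by
  have hle : (2 : ℝ) ^ Nat.log2 n ≤ n := mod_cast Nat.log2_self_le hn.ne'
  have hn' : (0 : ℝ) < n := mod_cast hn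
  have hpow : (0 : ℝ) < 2 ^ Nat.log2 n := by positivity
  rw [logArg]
  push_cast
  refine ⟨div_nonneg (by linarith) (by positivity), (div_lt_one (by positivity)).2 (by linarith),
    ?_⟩
  have e : (1 + ((n : ℝ) - 2 ^ Nat.log2 n) / (n + 2 ^ Nat.log2 n)) /
      (1 - ((n : ℝ) - 2 ^ Nat.log2 n) / (n + 2 ^ Nat.log2 n)) = n / 2 ^ Nat.log2 n := by
    have : (n : ℝ) + 2 ^ Nat.log2 n ≠ 0 := by positivity
    rw [one_add_div this, one_sub_div this, div_div_div_cancel_right₀ this]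
    rw [show (n : ℝ) + 2 ^ Nat.log2 n + (n - 2 ^ Nat.log2 n) = 2 * n by ring,
      show (n : ℝ) + 2 ^ Nat.log2 n - (n - 2 ^ Nat.log2 n) = 2 * 2 ^ Nat.log2 n by ring,
      mul_div_mul_left _ _ two_ne_zero]
  rw [e, Real.log_div hn'.ne' hpow.ne', Real.log_pow]
  ring

theorem cast_artanhSum (z : ℚ) :
    (artanhSum z : ℝ) = ∑ i ∈ range 8, (z : ℝ) ^ (2 * i + 1) / (2 * i + 1) := by
  simp [artanhSum]

theorem logLower_le {n : ℕ} (hn : 0 < n) : (logLower n : ℝ) ≤ Real.log n := by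
  obtain ⟨h₀, h₁, h⟩ := log_eq_log2_mul_add hn
  rw [h, logLower]
  push_cast
  rw [cast_artanhSum]
  have := Real.log_two_gt_d9
  gcongr
  · linarith
  · exact Real.sum_range_le_log_div h₀ h₁ 8

theorem le_logUpper {n : ℕ} (hn : 0 < n) : Real.log n ≤ (logUpper n : ℝ) := by
  obtain ⟨h₀, h₁, h⟩ := log_eq_log2_mul_add hn
  rw [h, logUpper]
  push_cast
  rw [cast_artanhSum]
  have := Real.log_two_lt_d9
  gcongr
  · linarith
  · exact Real.log_div_le_sum_range_add h₀ h₁ 8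

theorem rpow_neg_add_half (j : ℕ) {x : ℝ} (hx : 0 < x) :
    x ^ (-((j : ℝ) + 1 / 2)) = 1 / (x ^ j * √x) := by
  rw [Real.rpow_neg hx.le, Real.rpow_add hx, Real.rpow_natCast, Real.sqrt_eq_rpow,
    one_div (x ^ j * _)]

theorem rpowLower_le (j : ℕ) {n : ℕ} (hn : 0 < n) :
    (rpowLower j n : ℝ) ≤ (n : ℝ) ^ (-((j : ℝ) + 1 / 2)) := by
  have hn' : (0 : ℝ) < n := mod_cast hn
  rw [rpow_neg_add_half j hn', rpowLower]
  push_cast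
  gcongr
  exact le_sqrtUpper n

theorem le_rpowUpper (j : ℕ) {n : ℕ} (hn : 0 < n) :
    (n : ℝ) ^ (-((j : ℝ) + 1 / 2)) ≤ (rpowUpper j n : ℝ) := by
  have hn' : (0 : ℝ) < n := mod_cast hn
  have := sqrtLower_pos hn
  rw [rpow_neg_add_half j hn', rpowUpper]
  push_cast
  gcongr
  exact sqrtLower_le n

theorem rpowLower_pos (j : ℕ) {n : ℕ} (hn : 0 < n) : 0 < (rpowLower j n : ℝ) := by
  have hn' : (0 : ℝ) < n := mod_cast hn
  have := (Real.sqrt_pos.2 hn').trans_le (le_sqrtUpper n)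
  rw [rpowLower]
  push_cast
  positivity

theorem zetaLower_le {j : ℕ} (hj : 1 ≤ j) (N : ℕ) :
    (zetaLower j N : ℝ) ≤ ∑ n ∈ range N, ((n : ℝ) + 1) ^ (-((j : ℝ) + 1 / 2)) +
      (((N : ℝ) + 1) ^ (1 - ((j : ℝ) + 1 / 2)) / ((j : ℝ) + 1 / 2 - 1) +
        ((N : ℝ) + 1) ^ (-((j : ℝ) + 1 / 2)) / 2) := by
  have hj' : (1 : ℝ) ≤ j := mod_cast hj
  have h (n : ℕ) := rpowLower_le j n.succ_pos
  push_cast at h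
  have hN : (0 : ℝ) < (N : ℝ) + 1 := by positivity
  rw [zetaLower]
  push_cast
  refine add_le_add (sum_le_sum fun n _ ↦ h n) ?_
  rw [show 1 - ((j : ℝ) + 1 / 2) = -((j : ℝ) + 1 / 2) + 1 by ring, Real.rpow_add_one hN.ne',
    show (j : ℝ) + 1 / 2 - 1 = j - 1 / 2 by ring]
  have hpos : 0 ≤ ((N : ℝ) + 1) / (j - 1 / 2) + 1 / 2 := by
    have : 0 < (j : ℝ) - 1 / 2 := by linarith
    positivity
  exact (mul_le_mul_of_nonneg_right (h N) hpos).trans_eq (by ring)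

theorem le_negDerivZetaUpper {j : ℕ} (hj : 1 ≤ j) {N : ℕ} (hN : 1 ≤ N) :
    ∑ n ∈ range N, Real.log ((n : ℝ) + 1) * ((n : ℝ) + 1) ^ (-((j : ℝ) + 1 / 2)) +
        (((j : ℝ) + 1 / 2 - 1) * Real.log (N + 1 / 2) + 1) *
          ((N : ℝ) + 1 / 2) ^ (1 - ((j : ℝ) + 1 / 2)) / ((j : ℝ) + 1 / 2 - 1) ^ 2 ≤
      (negDerivZetaUpper j N : ℝ) := by
  have hj' : 0 < (j : ℝ) - 1 / 2 := by
    have : (1 : ℝ) ≤ j := mod_cast hj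
    linarith
  have hN' : (1 : ℝ) ≤ N := mod_cast hN
  have hN₀ : 0 < (N : ℝ) + 1 / 2 := by linarith
  have heq : (N : ℝ) + 1 / 2 = ((2 * N + 1 : ℕ) : ℝ) / (2 : ℕ) := by push_cast; ring
  have hlog : Real.log (N + 1 / 2) ≤ logUpper (2 * N + 1) - logLower 2 := by
    rw [heq, Real.log_div (by positivity) (by norm_num)]
    exact sub_le_sub (le_logUpper (by omega)) (logLower_le two_pos)
  have hlog₀ : 0 ≤ Real.log (N + 1 / 2) := Real.log_nonneg (by linarith)
  have hpow : ((N : ℝ) + 1 / 2) ^ (1 - ((j : ℝ) + 1 / 2)) ≤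
      (N + 1 / 2) * (rpowUpper j (2 * N + 1) / rpowLower j 2) := by
    rw [show 1 - ((j : ℝ) + 1 / 2) = 1 + -((j : ℝ) + 1 / 2) by ring, Real.rpow_add hN₀,
      Real.rpow_one]
    gcongr
    rw [heq, Real.div_rpow (by positivity) (by positivity)]
    have := rpowLower_pos j two_pos
    have h₁ := le_rpowUpper j (n := 2 * N + 1) (by omega)
    exact div_le_div₀ ((Real.rpow_nonneg (by positivity) _).trans h₁) h₁ this
      (rpowLower_le j two_pos)
  rw [negDerivZetaUpper, show (j : ℝ) + 1 / 2 - 1 = j - 1 / 2 by ring]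
  push_cast
  have hterm (n : ℕ) : Real.log ((n : ℝ) + 1) * ((n : ℝ) + 1) ^ (-((j : ℝ) + 1 / 2)) ≤
      logUpper (n + 1) * rpowUpper j (n + 1) := by
    have h₁ := le_logUpper n.succ_pos
    have h₂ := le_rpowUpper j n.succ_pos
    have h₀ := (Real.log_natCast_nonneg (n + 1)).trans h₁
    push_cast at h₁ h₂
    gcongr
  have h₀ : 0 ≤ (logUpper (2 * N + 1) : ℝ) - logLower 2 := hlog₀.trans hlog
  refine add_le_add (sum_le_sum fun n _ ↦ hterm n) ?_
  gcongr

theorem gap_nonneg {x : ℝ} (hx : 1 < x) :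
    0 ≤ 1 / (x * √x - 1) + 1 / (x ^ 2 * √x - 1) - 1 / (√x * (x - 1)) := by
  have hy : 1 < √x := Real.lt_sqrt_of_sq_lt (by simpa using hx)
  set y := √x with hy'
  have hxy : x = y ^ 2 := (Real.sq_sqrt (by linarith)).symm
  rw [hxy]
  have h₃ : 0 < y ^ 2 * y - 1 := by nlinarith
  have h₅ : 0 < (y ^ 2) ^ 2 * y - 1 := by nlinarith
  have h₂ : 0 < y * (y ^ 2 - 1) := by nlinarith
  have e : 1 / (y ^ 2 * y - 1) + 1 / ((y ^ 2) ^ 2 * y - 1) - 1 / (y * (y ^ 2 - 1)) =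
      (y - 1) ^ 2 * (y ^ 3 + y ^ 2 - 1) /
        ((y ^ 2 * y - 1) * ((y ^ 2) ^ 2 * y - 1) * (y * (y ^ 2 - 1))) := by
    rw [div_add_div _ _ h₃.ne' h₅.ne', div_sub_div _ _ (by positivity) h₂.ne']
    congr 1
    ring
  rw [e]
  have : 0 ≤ y ^ 3 + y ^ 2 - 1 := by nlinarith
  positivity

theorem gapLower_le {n : ℕ} (hn : 2 ≤ n) :
    (gapLower n : ℝ) ≤ Real.log n *
      (1 / (n * √n - 1) + 1 / ((n : ℝ) ^ 2 * √n - 1) - 1 / (√n * ((n : ℝ) - 1))) := by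
  have hn' : (2 : ℝ) ≤ n := mod_cast hn
  have hy : 1 < √(n : ℝ) := Real.lt_sqrt_of_sq_lt (by linarith)
  have hs := sqrtLower_pos (n := n) (by omega)
  have h₁ : 0 < n * √(n : ℝ) - 1 := by nlinarith
  have h₂ : 0 < (n : ℝ) ^ 2 * √n - 1 := by nlinarith
  have h₃ : 0 < (n : ℝ) - 1 := by linarith
  have hlog : 0 ≤ (logLower n : ℝ) := by
    obtain ⟨h₀, -, -⟩ := log_eq_log2_mul_add (n := n) (by omega)
    rw [logLower]
    push_cast
    rw [cast_artanhSum]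
    positivity
  have key : 1 / (n * (sqrtUpper n : ℝ) - 1) + 1 / ((n : ℝ) ^ 2 * sqrtUpper n - 1) -
      1 / (sqrtLower n * ((n : ℝ) - 1)) ≤
      1 / (n * √n - 1) + 1 / ((n : ℝ) ^ 2 * √n - 1) - 1 / (√n * ((n : ℝ) - 1)) := by
    gcongr
    · exact le_sqrtUpper n
    · exact le_sqrtUpper n
    · exact sqrtLower_le n
  rw [gapLower]
  push_cast
  exact (mul_le_mul_of_nonneg_left key hlog).trans
    (mul_le_mul_of_nonneg_right (logLower_le (by omega)) (gap_nonneg (by linarith)))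


theorem negDerivZetaUpper_lt_mul_zetaLower :
    negDerivZetaUpper 1 50 < 1505244 / 10 ^ 6 * zetaLower 1 50 ∧
    negDerivZetaUpper 2 50 < 288742 / 10 ^ 6 * zetaLower 2 50 := by
  decide +kernel

theorem lt_sum_gapLower : 7249 / 10 ^ 5 < ∑ p ∈ range 170 with p.Prime, gapLower p := by
  decide +kernel

theorem tsum_log_div_rpow_sub_one_lt {j N : ℕ} (hj : 1 ≤ j) (hN : 5 ≤ N) {c : ℚ}
    (hc : negDerivZetaUpper j N < c * zetaLower j N) (hc₀ : 0 ≤ c) :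
    ∑' p : Nat.Primes, Real.log (p : ℕ) / (((p : ℕ) : ℝ) ^ ((j : ℝ) + 1 / 2) - 1) < c := by
  have hs : 1 < (j : ℝ) + 1 / 2 := by
    have : (1 : ℝ) ≤ j := mod_cast hj
    linarith
  have hζ₀ : 0 ≤ ∑' n : ℕ, ((n : ℝ) + 1) ^ (-((j : ℝ) + 1 / 2)) :=
    tsum_nonneg fun n ↦ by positivity
  have hζ := (zetaLower_le hj N).trans (le_tsum_rpow_neg hs N)
  have hD := (summable_and_tsum_log_mul_rpow_neg_le hs hN).2.trans
    (le_negDerivZetaUpper hj (by omega))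
  have hc' : (negDerivZetaUpper j N : ℝ) < c * zetaLower j N := mod_cast hc
  have hc₀' : (0 : ℝ) ≤ c := mod_cast hc₀
  refine (summable_and_tsum_log_div_rpow_sub_one_le hs).2.trans_lt (lt_of_mul_lt_mul_right ?_ hζ₀)
  rw [tsum_vonMangoldt_mul_tsum hs]
  exact hD.trans_lt (hc'.trans_le (by gcongr))

/-- The sum over all primes `p` of `(log p)/(√p (p−1))` converges and is `< 1.7215`. -/
theorem sum_log_div_sqrt_mul_sub_one_lt :
    Summable (fun p : Nat.Primes =>
      Real.log (p : ℕ) / (Real.sqrt (p : ℕ) * (((p : ℕ) : ℝ) - 1))) ∧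
    ∑' p : Nat.Primes, Real.log (p : ℕ) / (Real.sqrt (p : ℕ) * (((p : ℕ) : ℝ) - 1)) <
      1.7215 := by
  set gap : Nat.Primes → ℝ := fun p ↦ Real.log (p : ℕ) *
    (1 / ((p : ℕ) * √(p : ℕ) - 1) + 1 / (((p : ℕ) : ℝ) ^ 2 * √(p : ℕ) - 1) -
      1 / (√(p : ℕ) * (((p : ℕ) : ℝ) - 1)))
  set A : ℕ → Nat.Primes → ℝ := fun j p ↦
    Real.log (p : ℕ) / (((p : ℕ) : ℝ) ^ ((j : ℝ) + 1 / 2) - 1)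
  have hA (j : ℕ) (p : Nat.Primes) :
      A j p = Real.log (p : ℕ) * (1 / (((p : ℕ) : ℝ) ^ j * √(p : ℕ) - 1)) := by
    have hp : (0 : ℝ) < (p : ℕ) := mod_cast p.2.pos
    simp only [A]
    rw [Real.rpow_add hp, Real.rpow_natCast, ← Real.sqrt_eq_rpow, mul_one_div]
  have hterm (p : Nat.Primes) : Real.log (p : ℕ) / (√(p : ℕ) * (((p : ℕ) : ℝ) - 1)) =
      A 1 p + A 2 p - gap p := by
    rw [hA, hA, pow_one]
    simp only [gap]
    ring
  have hone (p : Nat.Primes) : (1 : ℝ) < (p : ℕ) := mod_cast p.2.one_lt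
  have hgap₀ (p : Nat.Primes) : 0 ≤ gap p :=
    mul_nonneg (Real.log_natCast_nonneg _) (gap_nonneg (hone p))
  have hterm₀ (p : Nat.Primes) :
      0 ≤ Real.log (p : ℕ) / (√(p : ℕ) * (((p : ℕ) : ℝ) - 1)) :=
    div_nonneg (Real.log_natCast_nonneg _)
      (mul_nonneg (Real.sqrt_nonneg _) (by linarith [hone p]))
  have h₁ : Summable (A 1) := (summable_and_tsum_log_div_rpow_sub_one_le (by norm_num)).1
  have h₂ : Summable (A 2) := (summable_and_tsum_log_div_rpow_sub_one_le (by norm_num)).1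
  have hgap : Summable gap :=
    (h₁.add h₂).of_nonneg_of_le hgap₀ fun p ↦ by linarith [hterm p, hterm₀ p]
  simp only [hterm]
  refine ⟨(h₁.add h₂).sub hgap, ?_⟩
  rw [(h₁.add h₂).tsum_sub hgap, h₁.tsum_add h₂]
  have hA₁ : ∑' p, A 1 p < _ :=
    tsum_log_div_rpow_sub_one_lt le_rfl (by norm_num) negDerivZetaUpper_lt_mul_zetaLower.1
      (by norm_num)
  have hA₂ : ∑' p, A 2 p < _ :=
    tsum_log_div_rpow_sub_one_lt one_le_two (by norm_num) negDerivZetaUpper_lt_mul_zetaLower.2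
      (by norm_num)
  have hgap_sum (t : Finset Nat.Primes) : ∑ p ∈ t, gap p ≤ ∑' p, gap p :=
    hgap.sum_le_tsum t fun p _ ↦ hgap₀ p
  have hgap_lower : (7249 / 10 ^ 5 : ℝ) < ∑' p, gap p := by
    calc (7249 / 10 ^ 5 : ℝ) < ∑ p ∈ range 170 with p.Prime, (gapLower p : ℝ) := by
          have h := (Rat.cast_lt (K := ℝ)).2 lt_sum_gapLower
          push_cast at h
          exact h
      _ = ∑ p ∈ (range 170).subtype Nat.Prime, (gapLower (p : ℕ) : ℝ) :=
          (sum_subtype_eq_sum_filter _).symm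
      _ ≤ ∑ p ∈ (range 170).subtype Nat.Prime, gap p :=
          sum_le_sum fun p _ ↦ gapLower_le p.2.two_le
      _ ≤ ∑' p, gap p := hgap_sum _
  push_cast at hA₁ hA₂
  linarith
end

section
/- The sum over all primes p of (log p)²/(p² − p) converges and is strictly less than 0.982. -/
open Finset

/-! ### Partial summation against Chebyshev's bound -/

lemma sum_mul_le_of_antitone {a g : ℕ → ℝ} {c : ℝ} (hg : Antitone g) (hg0 : ∀ n, 0 ≤ g n)
    (ha : ∀ n, ∑ i ∈ range n, a i ≤ c * n) (n : ℕ) :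
    ∑ i ∈ range n, a i * g i ≤ c * ∑ i ∈ range n, g i := by
  have key : ∑ i ∈ range n, a i * g i ≤
      c * ∑ i ∈ range n, g i + (∑ i ∈ range n, a i - c * n) * g n := by
    induction n with
    | zero => simp
    | succ n ih =>
      have h1 := ha (n + 1)
      have h2 : 0 ≤ g n - g (n + 1) := sub_nonneg.2 (hg n.le_succ)
      have h3 := mul_nonneg (sub_nonneg.2 h1) h2
      simp only [sum_range_succ, Nat.cast_succ] at h3 ⊢
      linarith
  have := mul_nonneg (sub_nonneg.2 (ha n)) (hg0 n)
  linarith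

/-- `log n` on the primes, zero elsewhere. -/
noncomputable def primeLog (n : ℕ) : ℝ := if n.Prime then Real.log n else 0

lemma primeLog_nonneg (n : ℕ) : 0 ≤ primeLog n := by
  unfold primeLog
  split_ifs
  exacts [Real.log_natCast_nonneg n, le_rfl]

lemma sum_primeLog_le (n : ℕ) : ∑ i ∈ range n, primeLog i ≤ Real.log 4 * n := by
  have h := Chebyshev.theta_le_log4_mul_x (Nat.cast_nonneg (α := ℝ) n)
  rw [Chebyshev.theta_eq_sum_Icc, Nat.floor_natCast, sum_filter] at h
  refine le_trans (sum_le_sum_of_subset_of_nonneg (t := Icc 0 n) ?_ ?_) h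
  · intro i hi
    simp only [mem_range, mem_Icc] at hi ⊢
    omega
  · exact fun i _ _ => primeLog_nonneg i

/-- The weight `log n / (n² - n)`. -/
noncomputable def logWeight (n : ℕ) : ℝ := Real.log n / ((n : ℝ) ^ 2 - n)

lemma logWeight_nonneg (n : ℕ) : 0 ≤ logWeight n := by
  refine div_nonneg (Real.log_natCast_nonneg n) ?_
  rcases n.eq_zero_or_pos with rfl | h
  · simp
  · have : (1 : ℝ) ≤ n := by exact_mod_cast h
    nlinarith

lemma logWeight_succ_le {n : ℕ} (hn : 3 ≤ n) : logWeight (n + 1) ≤ logWeight n := by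
  have hn' : (3 : ℝ) ≤ n := by exact_mod_cast hn
  have he : Real.exp 1 ≤ n := Real.exp_one_lt_three.le.trans hn'
  have h1 : Real.log (n + 1) / (n + 1) ≤ Real.log n / n :=
    Real.log_div_self_antitoneOn he (show Real.exp 1 ≤ (n : ℝ) + 1 by linarith) (by linarith)
  have h2 : 1 / (n : ℝ) ≤ 1 / (n - 1) := one_div_le_one_div_of_le (by linarith) (by linarith)
  have h3 : 0 ≤ Real.log n / n := by
    have := Real.log_natCast_nonneg n
    positivity
  have e1 : logWeight (n + 1) = Real.log (n + 1) / (n + 1) * (1 / n) := by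
    unfold logWeight
    push_cast
    rw [div_mul_div_comm, mul_one]
    congr 1
    ring
  have e2 : logWeight n = Real.log n / n * (1 / (n - 1)) := by
    unfold logWeight
    rw [div_mul_div_comm, mul_one]
    congr 1
    ring
  rw [e1, e2]
  exact mul_le_mul h1 h2 (by positivity) h3

/-- A telescoping majorant of `logWeight`. -/
noncomputable def logTail (n : ℕ) : ℝ := (Real.log n + 1) / (n - 1)

lemma logTail_nonneg {n : ℕ} (hn : 1 ≤ n) : 0 ≤ logTail n := by
  have : (1 : ℝ) ≤ n := by exact_mod_cast hn
  have := Real.log_natCast_nonneg n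
  exact div_nonneg (by linarith) (by linarith)

lemma log_succ_le {n : ℕ} (hn : 1 ≤ n) : Real.log ((n : ℝ) + 1) ≤ Real.log n + 1 / n := by
  have hn' : (0 : ℝ) < n := by exact_mod_cast hn
  have h := Real.log_le_sub_one_of_pos (x := ((n : ℝ) + 1) / n) (by positivity)
  rw [Real.log_div (by positivity) hn'.ne', add_div, div_self hn'.ne'] at h
  linarith

lemma logWeight_le_logTail_sub {n : ℕ} (hn : 2 ≤ n) :
    logWeight n ≤ logTail n - logTail (n + 1) := by
  have hn' : (2 : ℝ) ≤ n := by exact_mod_cast hn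
  have h1 : (n : ℝ) - 1 ≠ 0 := by linarith
  have h0 : (n : ℝ) ≠ 0 := by linarith
  have h2 : (n : ℝ) ^ 2 - n ≠ 0 := by nlinarith
  have h3 : logTail (n + 1) ≤ (Real.log n + 1 / n + 1) / n := by
    unfold logTail
    push_cast
    rw [add_sub_cancel_right]
    gcongr
    exact log_succ_le (by omega)
  have h4 : logWeight n + 1 / ((n : ℝ) ^ 2 * (n - 1)) =
      logTail n - (Real.log n + 1 / n + 1) / n := by
    unfold logWeight logTail
    rw [show (n : ℝ) ^ 2 - n = n * (n - 1) by ring]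
    field_simp
    ring
  have h5 : 0 ≤ 1 / ((n : ℝ) ^ 2 * (n - 1)) := by
    have : (0 : ℝ) ≤ n - 1 := by linarith
    positivity
  linarith

/-- `logWeight`, made constant equal to `δ` up to `N`. -/
noncomputable def cappedWeight (N : ℕ) (δ : ℝ) (n : ℕ) : ℝ := if n ≤ N then δ else logWeight n

lemma cappedWeight_antitone {N : ℕ} {δ : ℝ} (hN : 2 ≤ N) (hδ : logWeight (N + 1) ≤ δ) :
    Antitone (cappedWeight N δ) := by
  refine antitone_nat_of_succ_le fun n => ?_
  unfold cappedWeight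
  rcases lt_trichotomy n N with h | rfl | h
  · rw [if_pos (by omega), if_pos (by omega)]
  · rwa [if_neg (by omega), if_pos le_rfl]
  · rw [if_neg (by omega), if_neg (by omega)]
    exact logWeight_succ_le (by omega)

lemma sum_cappedWeight_le {N : ℕ} {δ : ℝ} (hN : 1 ≤ N) (j : ℕ) :
    ∑ i ∈ range (N + 1 + j), cappedWeight N δ i ≤ (N + 1) * δ + logTail (N + 1) := by
  have key : ∑ i ∈ range (N + 1 + j), cappedWeight N δ i ≤
      (N + 1) * δ + logTail (N + 1) - logTail (N + 1 + j) := by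
    induction j with
    | zero =>
      have : ∑ i ∈ range (N + 1), cappedWeight N δ i = ∑ i ∈ range (N + 1), δ :=
        sum_congr rfl fun i hi => if_pos (by simpa [Nat.lt_succ_iff] using hi)
      simp [this]
    | succ j ih =>
      rw [← add_assoc, sum_range_succ]
      have h1 : cappedWeight N δ (N + 1 + j) = logWeight (N + 1 + j) := if_neg (by omega)
      have h2 := logWeight_le_logTail_sub (n := N + 1 + j) (by omega)
      linarith
  have := logTail_nonneg (n := N + 1 + j) (by omega)
  linarith

/-- The summand of the series, extended by zero to all natural numbers. -/
noncomputable def primeTerm (n : ℕ) : ℝ := primeLog n * logWeight n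

lemma primeTerm_nonneg (n : ℕ) : 0 ≤ primeTerm n :=
  mul_nonneg (primeLog_nonneg n) (logWeight_nonneg n)

/-- The sum over primes `p ≤ n` of `log p (log p / (p² - p) - δ)`. -/
noncomputable def headSum (δ : ℝ) (n : ℕ) : ℝ :=
  ∑ i ∈ range (n + 1), primeLog i * (logWeight i - δ)

lemma sum_primeTerm_le {N : ℕ} {δ : ℝ} (hN : 2 ≤ N) (hδ : logWeight (N + 1) ≤ δ) (n : ℕ) :
    ∑ i ∈ range n, primeTerm i ≤
      headSum δ N + Real.log 4 * ((N + 1) * δ + logTail (N + 1)) := by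
  have hδ0 : 0 ≤ δ := (logWeight_nonneg _).trans hδ
  have h1 : ∑ i ∈ range n, primeTerm i ≤ ∑ i ∈ range (N + 1 + n), primeTerm i :=
    sum_le_sum_of_subset_of_nonneg (range_subset_range.2 (by omega))
      fun i _ _ => primeTerm_nonneg i
  have h2 : ∑ i ∈ range (N + 1 + n), primeTerm i =
      headSum δ N + ∑ i ∈ range (N + 1 + n), primeLog i * cappedWeight N δ i := by
    rw [sum_range_add _ (N + 1) n, sum_range_add _ (N + 1) n, ← add_assoc, headSum,
      ← sum_add_distrib]
    congr 1
    · refine sum_congr rfl fun i hi => ?_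
      have : i ≤ N := by simpa [Nat.lt_succ_iff] using hi
      rw [cappedWeight, if_pos this, primeTerm]
      ring
    · refine sum_congr rfl fun i _ => ?_
      rw [cappedWeight, if_neg (by omega), primeTerm]
  have h3 := sum_mul_le_of_antitone (cappedWeight_antitone hN hδ) (fun i => by
    unfold cappedWeight
    split_ifs
    exacts [hδ0, logWeight_nonneg i]) sum_primeLog_le (N + 1 + n)
  have h4 := mul_le_mul_of_nonneg_left (sum_cappedWeight_le (δ := δ) (by omega : 1 ≤ N) n)
    (Real.log_nonneg (by norm_num : (1 : ℝ) ≤ 4))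
  linarith

/-! ### Integer upper bounds, scaled by `10 ^ 15`

The functions below are evaluated by the kernel, hence the raw arithmetic. -/

/-- `f n`, arranged so that the kernel evaluates `n` to a literal first. -/
def evalFirst {α : Type} (n : ℕ) (f : ℕ → α) : α :=
  Nat.rec (f 0) (fun k _ => f (Nat.succ k)) n

lemma evalFirst_eq {α : Type} (n : ℕ) (f : ℕ → α) : evalFirst n f = f n := by
  cases n <;> rfl

/-- Upper bound for the contribution of `n` to `headSum`, given the upper bound `L` for `log n`. -/
def termBound (L n : ℕ) : ℕ :=
  Nat.succ (Nat.div
    (Nat.mul L (Nat.sub (Nat.mul 7100000000 L)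
      (Nat.mul 1000000000000000 (Nat.mul n (Nat.sub n 1)))))
    (Nat.mul 7100000000000000000000000 (Nat.mul n (Nat.sub n 1))))

/-- `termBound`, for `n` coprime to `P` only. -/
def siftedBound (P L n : ℕ) : ℕ := cond (Nat.beq (Nat.gcd n P) 1) (termBound L n) 0

/-- Upper bound for `log (n + 1) - log n`, precise for small `n`. -/
def fineLogStep (n : ℕ) : ℕ :=
  evalFirst (2 * n + 1) fun m =>
    2000000000000000 / m + 2000000000000000 / (3 * m ^ 3) + 2000000000000000 / (5 * m ^ 5) +
      2000000000000000 / (7 * m ^ 7) + 2000000000000000 / (9 * m ^ 9) +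
      2000000000000000 / (m ^ 9 * (m ^ 2 - 1)) + 6

/-- Upper bound for `log (n + 6) - log n`. -/
def coarseLogStep (n : ℕ) : ℕ :=
  Nat.succ (Nat.div (Nat.mul 6000000000000000 (Nat.add n 3)) (Nat.mul n (Nat.add n 6)))

/-- Run through `k` blocks of length `s` starting after `n`, with current bounds `L` for `log n`
and `acc` for `headSum`, and compare the final bounds with `Lmax` and `amax`. -/
def sweep (s : ℕ) (inc : ℕ → ℕ) (wt : ℕ → ℕ → ℕ) (Lmax amax k : ℕ) : ℕ → ℕ → ℕ → Bool :=
  Nat.rec (fun _ L acc => Bool.and (Nat.ble L Lmax) (Nat.ble acc amax))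
    (fun _ ih n L acc =>
      evalFirst (Nat.add L (inc n)) fun L' =>
      evalFirst (Nat.add acc (wt L' n)) fun acc' =>
      evalFirst (Nat.add n s) fun n' => ih n' L' acc') k

/-- The real quantities at `n` are bounded by the scaled integers `L` and `acc`. -/
def IsBound (n L acc : ℕ) : Prop :=
  10 ^ 15 * Real.log n ≤ L ∧ 10 ^ 15 * headSum (1 / 7100000000) n ≤ acc

lemma isBound_of_sweep {s : ℕ} {inc : ℕ → ℕ} {wt : ℕ → ℕ → ℕ} {Q : ℕ → Prop}
    (hQ : ∀ n, Q n → Q (n + s))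
    (hinc : ∀ n, Q n → 10 ^ 15 * Real.log ↑(n + s) ≤ 10 ^ 15 * Real.log n + inc n)
    (hwt : ∀ n L : ℕ, Q n → 10 ^ 15 * Real.log ↑(n + s) ≤ L →
      10 ^ 15 * headSum (1 / 7100000000) (n + s) ≤
        10 ^ 15 * headSum (1 / 7100000000) n + wt L n)
    {Lmax amax k n L acc : ℕ} (hn : Q n) (h : IsBound n L acc)
    (hs : sweep s inc wt Lmax amax k n L acc = true) : IsBound (n + s * k) Lmax amax := by
  induction k generalizing n L acc with
  | zero =>
    have hs' : (Nat.ble L Lmax && Nat.ble acc amax) = true := hs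
    rw [Bool.and_eq_true, Nat.ble_eq, Nat.ble_eq] at hs'
    exact ⟨h.1.trans (by exact_mod_cast hs'.1), h.2.trans (by exact_mod_cast hs'.2)⟩
  | succ k ih =>
    have hs' : evalFirst (Nat.add L (inc n)) (fun L' =>
      evalFirst (Nat.add acc (wt L' n)) fun acc' =>
      evalFirst (Nat.add n s) fun n' => sweep s inc wt Lmax amax k n' L' acc') = true := hs
    simp only [evalFirst_eq, Nat.add_eq] at hs'
    have hL : 10 ^ 15 * Real.log ↑(n + s) ≤ ((L + inc n : ℕ) : ℝ) := by
      have := hinc n hn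
      have := h.1
      rw [Nat.cast_add L]
      linarith
    have h2 : IsBound (n + s) (L + inc n) (acc + wt (L + inc n) n) := by
      refine ⟨hL, ?_⟩
      have := hwt n _ hn hL
      have := h.2
      rw [Nat.cast_add acc]
      linarith
    have := ih (hQ n hn) h2 hs'
    rwa [show n + s + s * k = n + s * (k + 1) by ring] at this

lemma natCast_div_le_succ (a b : ℕ) : (a : ℝ) / b ≤ ((a / b : ℕ) : ℝ) + 1 := by
  rw [← Nat.floor_div_eq_div (K := ℝ)]
  exact (Nat.lt_floor_add_one _).le

lemma headTerm_le_termBound {L n : ℕ} (hn : 2 ≤ n) (h : 10 ^ 15 * Real.log n ≤ L) :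
    10 ^ 15 * (Real.log n * (logWeight n - 1 / 7100000000)) ≤ termBound L n := by
  have hn' : (2 : ℝ) ≤ n := by exact_mod_cast hn
  have hw : (0 : ℝ) < n * (n - 1) := by nlinarith
  have hcast : ((n - 1 : ℕ) : ℝ) = n - 1 := by rw [Nat.cast_sub (by omega), Nat.cast_one]
  set l := Real.log n with hl
  have hl0 : 0 ≤ l := Real.log_natCast_nonneg n
  have hL0 : (0 : ℝ) ≤ L := Nat.cast_nonneg L
  set t : ℕ := 7100000000 * L - 1000000000000000 * (n * (n - 1)) with ht
  have ht' : 7100000000 * (L : ℝ) - 10 ^ 15 * (n * (n - 1)) ≤ t := by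
    have : 7100000000 * L ≤ t + 1000000000000000 * (n * (n - 1)) := by omega
    have : (7100000000 * L : ℝ) ≤ t + 1000000000000000 * (n * ((n - 1 : ℕ) : ℝ)) := by
      exact_mod_cast this
    rw [hcast] at this
    linarith
  have h1 := natCast_div_le_succ (L * t) (7100000000000000000000000 * (n * (n - 1)))
  have e : termBound L n = L * t / (7100000000000000000000000 * (n * (n - 1))) + 1 := rfl
  rw [e]
  push_cast at h1 ⊢
  rw [hcast] at h1
  refine le_trans ?_ h1
  rw [le_div_iff₀ (by positivity)]
  have e2 : 10 ^ 15 * (l * (logWeight n - 1 / 7100000000)) *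
      (7100000000000000000000000 * (n * (n - 1))) =
      (10 ^ 15 * l) * (7100000000 * (10 ^ 15 * l) - 10 ^ 15 * (n * (n - 1))) := by
    rw [logWeight, ← hl, show (n : ℝ) ^ 2 - n = n * (n - 1) by ring]
    have : (n : ℝ) - 1 ≠ 0 := by linarith
    have : (n : ℝ) ≠ 0 := by linarith
    field_simp
    ring
  rw [e2]
  calc (10 ^ 15 * l : ℝ) * (7100000000 * (10 ^ 15 * l) - 10 ^ 15 * (n * (n - 1)))
      ≤ (10 ^ 15 * l) * (t : ℝ) := by
        refine mul_le_mul_of_nonneg_left ?_ (by positivity)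
        linarith
    _ ≤ (L : ℝ) * t := mul_le_mul_of_nonneg_right h (Nat.cast_nonneg t)

lemma primeLog_mul_le_siftedBound {k L p : ℕ} (hk : k < p) (h : 10 ^ 15 * Real.log p ≤ L) :
    10 ^ 15 * (primeLog p * (logWeight p - 1 / 7100000000)) ≤ siftedBound k.factorial L p := by
  unfold primeLog
  split_ifs with hp
  · have hc : Nat.gcd p k.factorial = 1 := hp.coprime_factorial_of_lt hk
    have : siftedBound k.factorial L p = termBound L p := by simp [siftedBound, hc]
    rw [this]
    exact headTerm_le_termBound hp.two_le h
  · simp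

lemma headSum_succ (δ : ℝ) (n : ℕ) :
    headSum δ (n + 1) = headSum δ n + primeLog (n + 1) * (logWeight (n + 1) - δ) :=
  sum_range_succ _ _

lemma headSum_succ_of_not_prime (δ : ℝ) {n : ℕ} (h : ¬ (n + 1).Prime) :
    headSum δ (n + 1) = headSum δ n := by
  rw [headSum_succ, primeLog, if_neg h, zero_mul, add_zero]

lemma log_succ_le_fineLogStep {n : ℕ} (hn : 1 ≤ n) :
    10 ^ 15 * Real.log ↑(n + 1) ≤ 10 ^ 15 * Real.log n + fineLogStep n := by
  have hn' : (1 : ℝ) ≤ n := by exact_mod_cast hn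
  obtain ⟨m, hm⟩ : ∃ m, m = 2 * n + 1 := ⟨_, rfl⟩
  have hmr : (m : ℝ) = 2 * n + 1 := by exact_mod_cast hm
  have hm3 : (3 : ℝ) ≤ m := by linarith
  have hm0 : (m : ℝ) ≠ 0 := by linarith
  have hm1 : (m : ℝ) ^ 2 - 1 ≠ 0 := by nlinarith
  have hsub : ((m ^ 2 - 1 : ℕ) : ℝ) = (m : ℝ) ^ 2 - 1 := by
    rw [Nat.cast_sub (Nat.one_le_pow _ _ (by omega))]
    push_cast
    ring
  have h := Real.log_div_le_sum_range_add (x := 1 / (m : ℝ)) (by positivity)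
    (by rw [div_lt_one (by linarith)]; linarith) 5
  have e1 : (1 + 1 / (m : ℝ)) / (1 - 1 / m) = ((n : ℝ) + 1) / n := by
    have : (m : ℝ) - 1 ≠ 0 := by linarith
    rw [one_add_div hm0, one_sub_div hm0, div_div_div_cancel_right₀ hm0, hmr]
    rw [div_eq_div_iff (by linarith) (by linarith)]
    ring
  rw [e1, Real.log_div (by positivity) (by positivity)] at h
  have e2 : (1 / (m : ℝ)) ^ (2 * 5 + 1) / (1 - (1 / (m : ℝ)) ^ 2) =
      1 / ((m : ℝ) ^ 9 * ((m : ℝ) ^ 2 - 1)) := by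
    have : 1 - (1 / (m : ℝ)) ^ 2 = ((m : ℝ) ^ 2 - 1) / (m : ℝ) ^ 2 := by field_simp
    rw [this, one_div_pow]
    field_simp
  rw [e2] at h
  simp only [sum_range_succ, sum_range_zero] at h
  have d1 := natCast_div_le_succ 2000000000000000 m
  have d3 := natCast_div_le_succ 2000000000000000 (3 * m ^ 3)
  have d5 := natCast_div_le_succ 2000000000000000 (5 * m ^ 5)
  have d7 := natCast_div_le_succ 2000000000000000 (7 * m ^ 7)
  have d9 := natCast_div_le_succ 2000000000000000 (9 * m ^ 9)
  have d11 := natCast_div_le_succ 2000000000000000 (m ^ 9 * (m ^ 2 - 1))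
  have e : fineLogStep n = 2000000000000000 / m + 2000000000000000 / (3 * m ^ 3) +
      2000000000000000 / (5 * m ^ 5) + 2000000000000000 / (7 * m ^ 7) +
      2000000000000000 / (9 * m ^ 9) + 2000000000000000 / (m ^ 9 * (m ^ 2 - 1)) + 6 := by
    rw [fineLogStep, evalFirst_eq, hm]
  rw [e]
  rw [Nat.cast_mul, hsub] at d11
  push_cast at d1 d3 d5 d7 d9 d11 h ⊢
  have key : 10 ^ 15 * 2 * ((0 + (1 / (m : ℝ)) ^ (2 * 0 + 1) / (2 * 0 + 1) +
      (1 / (m : ℝ)) ^ (2 * 1 + 1) / (2 * 1 + 1) + (1 / (m : ℝ)) ^ (2 * 2 + 1) / (2 * 2 + 1) +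
      (1 / (m : ℝ)) ^ (2 * 3 + 1) / (2 * 3 + 1) + (1 / (m : ℝ)) ^ (2 * 4 + 1) / (2 * 4 + 1)) +
      1 / ((m : ℝ) ^ 9 * ((m : ℝ) ^ 2 - 1))) =
      2000000000000000 / (m : ℝ) + 2000000000000000 / (3 * (m : ℝ) ^ 3) +
      2000000000000000 / (5 * (m : ℝ) ^ 5) + 2000000000000000 / (7 * (m : ℝ) ^ 7) +
      2000000000000000 / (9 * (m : ℝ) ^ 9) +
      2000000000000000 / ((m : ℝ) ^ 9 * ((m : ℝ) ^ 2 - 1)) := by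
    simp only [one_div_pow]
    field_simp
    ring
  linarith

lemma log_add_six_le_coarseLogStep {n : ℕ} (hn : 1 ≤ n) :
    10 ^ 15 * Real.log ↑(n + 6) ≤ 10 ^ 15 * Real.log n + coarseLogStep n := by
  have hn' : (1 : ℝ) ≤ n := by exact_mod_cast hn
  have h := Real.log_div_le_sum_range_add (x := 3 / ((n : ℝ) + 3)) (by positivity)
    (by rw [div_lt_one (by linarith)]; linarith) 0
  have e1 : (1 + 3 / ((n : ℝ) + 3)) / (1 - 3 / (n + 3)) = ((n : ℝ) + 6) / n := by
    have h3 : (n : ℝ) + 3 ≠ 0 := by linarith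
    rw [one_add_div h3, one_sub_div h3, div_div_div_cancel_right₀ h3]
    congr 1 <;> ring
  have e2 : (3 / ((n : ℝ) + 3)) ^ (2 * 0 + 1) / (1 - (3 / ((n : ℝ) + 3)) ^ 2) =
      3 * (n + 3) / (n * (n + 6)) := by
    have h3 : (n : ℝ) + 3 ≠ 0 := by linarith
    have : 1 - (3 / ((n : ℝ) + 3)) ^ 2 = (n * (n + 6)) / ((n : ℝ) + 3) ^ 2 := by
      field_simp
      ring
    rw [this, mul_zero, zero_add, pow_one]
    field_simp
  rw [e1, e2, Real.log_div (by positivity) (by positivity), sum_range_zero, zero_add] at h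
  have d := natCast_div_le_succ (6000000000000000 * (n + 3)) (n * (n + 6))
  have e : coarseLogStep n = 6000000000000000 * (n + 3) / (n * (n + 6)) + 1 := rfl
  rw [e]
  push_cast at d ⊢
  have e3 : 6000000000000000 * ((n : ℝ) + 3) / (n * (n + 6)) =
      10 ^ 15 * (2 * (3 * (n + 3) / (n * (n + 6)))) := by ring
  rw [e3] at d
  linarith

lemma isBound_of_sweep_fine {j k n L acc Lmax amax : ℕ} (hn : 1 ≤ n) (hj : j ≤ n)
    (h : IsBound n L acc)
    (hs : evalFirst j.factorial (fun P =>
      sweep 1 fineLogStep (fun L n => siftedBound P L (Nat.succ n)) Lmax amax k n L acc) = true) :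
    IsBound (n + k) Lmax amax := by
  rw [evalFirst_eq] at hs
  have := isBound_of_sweep (Q := fun n => 1 ≤ n ∧ j ≤ n) (fun n h => ⟨by omega, by omega⟩)
    (fun n h => log_succ_le_fineLogStep h.1) (fun n L hn hL => ?_) ⟨hn, hj⟩ h hs
  · rwa [one_mul] at this
  · have := primeLog_mul_le_siftedBound (k := j) (by omega) hL
    rw [headSum_succ]
    linarith

lemma isBound_of_sweep_coarse {j k n L acc Lmax amax : ℕ} (hn : 4 ≤ n) (hn6 : n % 6 = 1)
    (hj : j ≤ n) (h : IsBound n L acc)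
    (hs : evalFirst j.factorial (fun P =>
      sweep 6 coarseLogStep (fun L n => Nat.add (siftedBound P L (Nat.add n 4))
        (siftedBound P L (Nat.add n 6))) Lmax amax k n L acc) = true) :
    IsBound (n + 6 * k) Lmax amax := by
  rw [evalFirst_eq] at hs
  refine isBound_of_sweep (Q := fun n => 4 ≤ n ∧ n % 6 = 1 ∧ j ≤ n) (fun n h => by omega)
    (fun n h => log_add_six_le_coarseLogStep (by omega)) (fun n L hn hL => ?_)
    ⟨hn, hn6, hj⟩ h hs
  obtain ⟨h4, h6, hj⟩ := hn
  have hlog : Real.log ↑(n + 4) ≤ Real.log ↑(n + 6) :=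
    Real.log_le_log (by positivity) (by exact_mod_cast (by omega : n + 4 ≤ n + 6))
  have b4 := primeLog_mul_le_siftedBound (k := j) (p := n + 4) (L := L) (by omega) (by linarith)
  have b6 := primeLog_mul_le_siftedBound (k := j) (p := n + 6) (by omega) hL
  have two : ∀ m, 2 < m → m % 2 = 0 → ¬ m.Prime := fun m h2 hm hp =>
    (Nat.Prime.eq_two_or_odd hp).elim (by omega) (by omega)
  have three : ¬ (n + 2).Prime := fun hp => by
    have := (Nat.prime_dvd_prime_iff_eq Nat.prime_three hp).1 (by omega)
    omega
  rw [headSum_succ, headSum_succ_of_not_prime _ (two (n + 4 + 1) (by omega) (by omega)),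
    headSum_succ, headSum_succ_of_not_prime _ (two (n + 2 + 1) (by omega) (by omega)),
    headSum_succ_of_not_prime _ three,
    headSum_succ_of_not_prime _ (two (n + 1) (by omega) (by omega))]
  simp only [Nat.add_eq, Nat.cast_add (siftedBound _ _ _), add_assoc, Nat.reduceAdd] at *
  linarith

/-! ### The numerical bound -/

lemma isBound_two : IsBound 2 693147180800000 240226507027868 := by
  have hlog := Real.log_two_lt_d9
  have hL : 10 ^ 15 * Real.log ((2 : ℕ) : ℝ) ≤ ((693147180800000 : ℕ) : ℝ) := by
    push_cast
    linarith
  refine ⟨hL, ?_⟩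
  have h := primeLog_mul_le_siftedBound (k := 1) (by norm_num) hL
  have e : siftedBound (Nat.factorial 1) 693147180800000 2 = 240226507027868 := by
    decide +kernel
  rw [e] at h
  rw [headSum_succ, headSum_succ_of_not_prime _ (by norm_num)]
  simpa [headSum, primeLog] using h

lemma isBound_835 : IsBound 835 6727431764912584 972839067870426 := by
  have h3 : IsBound (2 + 1) 1098612327720639 441384681309761 :=
    isBound_of_sweep_fine (j := 1) (by norm_num) (by norm_num) isBound_two (by decide +kernel)
  have h24 : IsBound (3 + 21) 3178053870405928 829791186657806 :=
    isBound_of_sweep_fine (j := 3) (by norm_num) (by norm_num) h3 (by decide +kernel)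
  exact isBound_of_sweep_fine (k := 811) (j := 23) (by norm_num) (by norm_num) h24
    (by decide +kernel)

lemma isBound_300835 : IsBound 300835 12614321563474958 981870527205495 :=
  isBound_of_sweep_coarse (k := 50000) (j := 547) (by norm_num) (by norm_num) (by norm_num)
    isBound_835 (by decide +kernel)

lemma sum_primeTerm_le_const (n : ℕ) : ∑ i ∈ range n, primeTerm i ≤ 0.981995 := by
  obtain ⟨hL, hS⟩ := isBound_300835
  have h1 : Real.log 300836 ≤ 12.6144 := by
    have := log_succ_le (n := 300835) (by norm_num)
    norm_num at this hL
    linarith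
  have hδ : logWeight (300835 + 1) ≤ 1 / 7100000000 := by
    unfold logWeight
    rw [div_le_iff₀ (by norm_num)]
    norm_num
    linarith
  have h := sum_primeTerm_le (by norm_num) hδ n
  have h4 : Real.log 4 ≤ 1.3862943616 := by
    have := Real.log_two_lt_d9
    rw [show (4 : ℝ) = 2 ^ 2 by norm_num, Real.log_pow]
    norm_num
    linarith
  have ht : ((300835 : ℕ) + 1) * (1 / 7100000000 : ℝ) + logTail (300835 + 1) ≤ 0.0000876283 := by
    unfold logTail
    norm_num
    linarith
  have ht0 : 0 ≤ ((300835 : ℕ) + 1) * (1 / 7100000000 : ℝ) + logTail (300835 + 1) :=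
    add_nonneg (by positivity) (logTail_nonneg (by norm_num))
  have hm := mul_le_mul h4 ht ht0 (by norm_num)
  norm_num at hS hm h ⊢
  linarith

/-- The sum over all primes `p` of `(log p)²/(p² − p)` converges and is `< 0.982`. -/
theorem sum_log_sq_div_p_sq_sub_p_lt :
    Summable (fun p : Nat.Primes =>
      Real.log (p : ℕ) ^ 2 / (((p : ℕ) : ℝ) ^ 2 - ((p : ℕ) : ℝ))) ∧
    ∑' p : Nat.Primes, Real.log (p : ℕ) ^ 2 / (((p : ℕ) : ℝ) ^ 2 - ((p : ℕ) : ℝ)) <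
      0.982 := by
  have hsum : Summable primeTerm :=
    summable_of_sum_range_le primeTerm_nonneg sum_primeTerm_le_const
  have hle : ∑' n, primeTerm n ≤ 0.981995 :=
    Real.tsum_le_of_sum_range_le primeTerm_nonneg sum_primeTerm_le_const
  have hinj : Function.Injective (fun p : Nat.Primes => (p : ℕ)) := Subtype.val_injective
  have hsupp : Function.support primeTerm ⊆ Set.range (fun p : Nat.Primes => (p : ℕ)) := by
    intro n hn
    by_contra hr
    refine hn ?_
    have : ¬ n.Prime := fun hp => hr ⟨⟨n, hp⟩, rfl⟩
    rw [primeTerm, primeLog, if_neg this, zero_mul]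
  have heq : (fun p : Nat.Primes =>
      Real.log (p : ℕ) ^ 2 / (((p : ℕ) : ℝ) ^ 2 - ((p : ℕ) : ℝ))) =
      fun p : Nat.Primes => primeTerm (p : ℕ) := by
    funext p
    rw [primeTerm, primeLog, if_pos p.2, logWeight, mul_div_assoc', sq (Real.log _)]
  rw [heq]
  refine ⟨hsum.comp_injective hinj, ?_⟩
  rw [hinj.tsum_eq hsupp]
  exact hle.trans_lt (by norm_num)
end

section
/- Assume the Riemann Hypothesis. Then for all x ≥ 10^13, one has Σ_{n ≤ x} Λ(n)²/n ≤ (log x)²/2 + 4.5222, where Λ is the von Mangoldt function. -/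
open ArithmeticFunction
open MeasureTheory Set Filter Topology

/-- The Mellin-type integral `∫₁^∞ {t} t^(-s-1) dt`. -/
noncomputable def fractMellin (s : ℂ) : ℂ :=
  ∫ t in Ioi (1 : ℝ), ((Int.fract t : ℝ) : ℂ) * (t : ℂ) ^ (-(s + 1))

lemma norm_fract_mul_cpow_le {s : ℂ} {t : ℝ} (ht : 1 < t) :
    ‖((Int.fract t : ℝ) : ℂ) * (t : ℂ) ^ (-(s + 1))‖ ≤ t ^ (-s.re - 1) := by
  have ht0 : 0 < t := by linarith
  rw [norm_mul, Complex.norm_cpow_eq_rpow_re_of_pos ht0, Complex.norm_real, Real.norm_eq_abs,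
    Int.abs_fract]
  have : (-(s + 1)).re = -s.re - 1 := by simp; ring
  rw [this]
  exact mul_le_of_le_one_left (by positivity) (Int.fract_lt_one t).le

lemma integrableOn_fract_mul_cpow {s : ℂ} (hs : 0 < s.re) :
    IntegrableOn (fun t : ℝ ↦ ((Int.fract t : ℝ) : ℂ) * (t : ℂ) ^ (-(s + 1))) (Ioi 1) := by
  have h := integrableOn_Ioi_rpow_of_lt (a := -s.re - 1) (by linarith) (zero_lt_one)
  refine h.mono' ?_ ?_
  · refine AEStronglyMeasurable.mul ?_ ?_
    · exact (Complex.measurable_ofReal.comp measurable_fract).aestronglyMeasurable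
    · refine ContinuousOn.aestronglyMeasurable ?_ measurableSet_Ioi
      refine ContinuousOn.cpow_const Complex.continuous_ofReal.continuousOn ?_
      intro t ht
      exact Complex.ofReal_mem_slitPlane.2 (lt_trans zero_lt_one ht)
  · filter_upwards [ae_restrict_mem measurableSet_Ioi] with t ht
    exact norm_fract_mul_cpow_le ht

lemma norm_fractMellin_le {s : ℂ} (hs : 0 < s.re) : ‖fractMellin s‖ ≤ 1 / s.re := by
  have h := integrableOn_Ioi_rpow_of_lt (a := -s.re - 1) (by linarith) (zero_lt_one)
  have h2 := integral_Ioi_rpow_of_lt (a := -s.re - 1) (by linarith) (zero_lt_one)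
  have : ∫ t in Ioi (1 : ℝ), t ^ (-s.re - 1) = 1 / s.re := by
    rw [h2]; simp
  rw [← this]
  refine norm_integral_le_of_norm_le h ?_
  filter_upwards [ae_restrict_mem measurableSet_Ioi] with t ht
  exact norm_fract_mul_cpow_le ht

lemma fractMellin_eq_mellin (s : ℂ) :
    fractMellin s = mellin ((Ioi (1 : ℝ)).indicator fun t ↦ ((Int.fract t : ℝ) : ℂ)) (-s) := by
  rw [mellin, fractMellin]
  have : ∀ t : ℝ, (t : ℂ) ^ (-s - 1) • (Ioi (1 : ℝ)).indicator
      (fun t ↦ ((Int.fract t : ℝ) : ℂ)) t = (Ioi (1 : ℝ)).indicator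
      (fun t ↦ ((Int.fract t : ℝ) : ℂ) * (t : ℂ) ^ (-(s + 1))) t := by
    intro t
    by_cases ht : t ∈ Ioi (1 : ℝ)
    · simp only [indicator_of_mem ht, smul_eq_mul]
      rw [mul_comm]; congr 2; ring
    · simp [indicator_of_notMem ht]
  simp_rw [this]
  rw [setIntegral_indicator measurableSet_Ioi]
  congr 2
  ext t
  simp only [mem_inter_iff, mem_Ioi]
  exact ⟨fun h ↦ ⟨by linarith, h⟩, fun h ↦ h.2⟩

lemma differentiableAt_fractMellin {s : ℂ} (hs : 0 < s.re) :
    DifferentiableAt ℂ fractMellin s := by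
  have h : DifferentiableAt ℂ
      (mellin ((Ioi (1 : ℝ)).indicator fun t ↦ ((Int.fract t : ℝ) : ℂ))) (-s) := by
    refine mellin_differentiableAt_of_isBigO_rpow (a := 0) (b := -s.re - 1) ?_ ?_ (by simpa) ?_
      (by simp)
    · refine LocallyIntegrable.locallyIntegrableOn ?_ _
      refine LocallyIntegrable.indicator ?_ measurableSet_Ioi
      refine (locallyIntegrable_const (1 : ℝ)).mono ?_ ?_
      · exact (Complex.measurable_ofReal.comp measurable_fract).aestronglyMeasurable
      · refine Eventually.of_forall fun t ↦ ?_
        simpa [abs_of_nonneg (Int.fract_nonneg t)] using (Int.fract_lt_one t).le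
    · refine Asymptotics.IsBigO.of_bound 1 (Eventually.of_forall fun t ↦ ?_)
      simp only [neg_zero, Real.rpow_zero, norm_one, mul_one]
      refine (norm_indicator_le_norm_self _ _).trans ?_
      simpa [abs_of_nonneg (Int.fract_nonneg t)] using (Int.fract_lt_one t).le
    · refine Asymptotics.IsBigO.of_bound 1 ?_
      filter_upwards [Ioo_mem_nhdsGT (zero_lt_one' ℝ)] with t ht
      rw [indicator_of_notMem (by simpa using ht.2.le)]
      simp only [norm_zero]; positivity
  have h2 := h.comp s (differentiableAt_id.neg)
  refine h2.congr_of_eventuallyEq (Eventually.of_forall fun z ↦ ?_)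
  simp [fractMellin_eq_mellin]

lemma riemannZeta_eq_fractMellin {s : ℂ} (hs : 1 < s.re) :
    (s - 1) * riemannZeta s = s * (1 - (s - 1) * fractMellin s) := by
  have hs1 : s - 1 ≠ 0 := by
    intro h
    have : s = 1 := by linear_combination h
    rw [this] at hs; simp at hs
  have h := LSeries_eq_mul_integral_of_nonneg (fun _ ↦ 1) (r := 1) zero_le_one hs ?_ (by simp)
  swap
  · simp only [Finset.sum_const, Nat.card_Icc, add_tsub_cancel_right, nsmul_eq_mul, mul_one,
      Real.rpow_one]
    exact Asymptotics.isBigO_refl _ _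
  have h0 : LSeries (fun n ↦ (((fun _ ↦ 1 : ℕ → ℝ) n : ℝ) : ℂ)) s = riemannZeta s := by
    have := LSeries_one_eq_riemannZeta hs
    rw [← this]; simp; rfl
  rw [h0] at h
  have hI : ∫ t in Ioi (1 : ℝ), (t : ℂ) ^ (-s) = 1 / (s - 1) := by
    rw [integral_Ioi_cpow_of_lt (by simpa using hs) zero_lt_one]
    simp
    rw [← neg_sub, inv_neg]
    rw [show (1 - s) = -s + 1 by ring]
    rw [neg_div, one_div]
  have hII := integrableOn_Ioi_cpow_of_lt (a := -s) (by simpa using hs) (zero_lt_one)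
  have h3 : ∫ t in Ioi (1 : ℝ), (∑ k ∈ Finset.Icc 1 ⌊t⌋₊, (((fun _ ↦ 1 : ℕ → ℝ) k : ℝ) : ℂ))
      * (t : ℂ) ^ (-(s + 1)) = 1 / (s - 1) - fractMellin s := by
    rw [fractMellin, ← hI, ← integral_sub hII (integrableOn_fract_mul_cpow (by linarith))]
    refine setIntegral_congr_fun measurableSet_Ioi fun t ht ↦ ?_
    have ht0 : (0 : ℝ) < t := lt_trans zero_lt_one ht
    simp only [Complex.ofReal_one, Finset.sum_const, Nat.card_Icc, add_tsub_cancel_right,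
      nsmul_eq_mul, mul_one]
    have e1 : ((⌊t⌋₊ : ℕ) : ℂ) = (t : ℂ) - ((Int.fract t : ℝ) : ℂ) := by
      rw [← Complex.ofReal_natCast, natCast_floor_eq_intCast_floor ht0.le,
        ← Int.self_sub_fract, Complex.ofReal_sub]
    have e2 : (t : ℂ) ^ (-s) = (t : ℂ) * (t : ℂ) ^ (-(s + 1)) := by
      rw [show -s = 1 + (-(s + 1)) by ring, Complex.cpow_add _ _ (by exact_mod_cast ht0.ne'),
        Complex.cpow_one]
    rw [e1, e2]; ring
  rw [h3] at h
  rw [h]; field_simp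

/-- The regularised zeta function `(s - 1) ζ(s)`, expressed on `0 < Re s` by `fractMellin`. -/
noncomputable def zetaReg (s : ℂ) : ℂ := s * (1 - (s - 1) * fractMellin s)

lemma zetaReg_one : zetaReg 1 = 1 := by simp [zetaReg]

lemma differentiableAt_zetaReg {s : ℂ} (hs : 0 < s.re) : DifferentiableAt ℂ zetaReg s := by
  have := differentiableAt_fractMellin hs
  unfold zetaReg
  fun_prop

lemma zetaReg_eq {s : ℂ} (hs : 0 < s.re) (h1 : s ≠ 1) : zetaReg s = (s - 1) * riemannZeta s := by
  let Z : ℂ → ℂ := Function.update (fun s ↦ (s - 1) * riemannZeta s) 1 1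
  have hopen : IsOpen {s : ℂ | 0 < s.re} := isOpen_lt continuous_const Complex.continuous_re
  have hZ : Differentiable ℂ Z := by
    have hd : ∀ s : ℂ, s ≠ 1 → DifferentiableAt ℂ Z s := fun s hs1 ↦ by
      have h := ((differentiableAt_id (x := s) (𝕜 := ℂ)).sub_const 1).mul
        (differentiableAt_riemannZeta hs1)
      refine h.congr_of_eventuallyEq ?_
      filter_upwards [isOpen_ne.mem_nhds hs1] with z hz
      simp [Z, Function.update_of_ne hz]
    intro s
    rcases ne_or_eq s 1 with hs1 | rfl
    · exact hd s hs1
    · refine (Complex.analyticAt_of_differentiable_on_punctured_nhds_of_continuousAt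
        ?_ ?_).differentiableAt
      · filter_upwards [self_mem_nhdsWithin] with t ht using hd t ht
      · simpa only [Z, continuousAt_update_same] using riemannZeta_residue_one
  have key : EqOn zetaReg Z {s : ℂ | 0 < s.re} := by
    refine AnalyticOnNhd.eqOn_of_preconnected_of_eventuallyEq (𝕜 := ℂ) (z₀ := 2) ?_ ?_ ?_ (by simp) ?_
    · refine DifferentiableOn.analyticOnNhd (fun s hs ↦ ?_) hopen
      exact (differentiableAt_zetaReg hs).differentiableWithinAt
    · exact hZ.differentiableOn.analyticOnNhd hopen
    · exact (convex_halfSpace_re_gt 0).isPreconnected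
    · have : {s : ℂ | 1 < s.re} ∈ 𝓝 (2 : ℂ) :=
        (isOpen_lt continuous_const Complex.continuous_re).mem_nhds (by simp)
      filter_upwards [this] with s hs
      have hs1 : s ≠ 1 := by rintro rfl; simp at hs
      simp only [Z, Function.update_of_ne hs1]
      rw [riemannZeta_eq_fractMellin hs, zetaReg]
  rw [key hs]
  simp [Z, Function.update_of_ne h1]

lemma zetaReg_ne_zero (hRH : RiemannHypothesis) {s : ℂ} (hs : 1 / 2 < s.re) : zetaReg s ≠ 0 := by
  rcases eq_or_ne s 1 with rfl | h1
  · simp [zetaReg_one]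
  rw [zetaReg_eq (by linarith) h1]
  refine mul_ne_zero (sub_ne_zero.2 h1) fun h0 ↦ ?_
  have := hRH s h0 ?_ h1
  · linarith
  · rintro ⟨n, rfl⟩
    simp at hs
    have : (0 : ℝ) ≤ n := by positivity
    linarith

lemma norm_zetaReg_le {s : ℂ} (hs : 0 < s.re) : ‖zetaReg s‖ ≤ ‖s‖ * (1 + ‖s - 1‖ / s.re) := by
  rw [zetaReg, norm_mul]
  gcongr
  refine (norm_sub_le _ _).trans ?_
  rw [norm_one, norm_mul, div_eq_mul_one_div]
  gcongr
  exact norm_fractMellin_le hs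

lemma norm_riemannZeta_le {s : ℂ} (hs : 1 < s.re) : ‖riemannZeta s‖ ≤ ‖riemannZeta s.re‖ := by
  have hs' : 1 < ((s.re : ℝ) : ℂ).re := by simpa
  rw [zeta_eq_tsum_one_div_nat_cpow hs, zeta_eq_tsum_one_div_nat_cpow hs']
  have hsum : Summable fun n : ℕ ↦ 1 / (n : ℝ) ^ s.re := Real.summable_one_div_nat_rpow.2 hs
  have e : (fun n : ℕ ↦ (1 : ℂ) / (n : ℂ) ^ ((s.re : ℝ) : ℂ))
      = fun n : ℕ ↦ (((1 / (n : ℝ) ^ s.re : ℝ)) : ℂ) := by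
    ext n; rw [Complex.ofReal_div, Complex.ofReal_cpow (by positivity)]; simp
  rw [e, ← Complex.ofReal_tsum, Complex.norm_real, Real.norm_of_nonneg
    (tsum_nonneg fun n ↦ by positivity)]
  refine tsum_of_norm_bounded hsum.hasSum fun n ↦ ?_
  rcases Nat.eq_zero_or_pos n with rfl | hn
  · have : s ≠ 0 := by rintro rfl; simp at hs; linarith
    rw [Nat.cast_zero, Complex.zero_cpow this]; simp; positivity
  · rw [norm_div, Complex.norm_natCast_cpow_of_pos hn]; simp

lemma fractMellin_ofReal (a : ℝ) :
    fractMellin a = ((∫ t in Ioi (1 : ℝ), Int.fract t * t ^ (-(a + 1)) : ℝ) : ℂ) := by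
  rw [fractMellin, ← integral_complex_ofReal]
  refine setIntegral_congr_fun measurableSet_Ioi fun t ht ↦ ?_
  have ht0 : (0 : ℝ) ≤ t := (lt_trans zero_lt_one ht).le
  simp only [Complex.ofReal_mul]
  rw [Complex.ofReal_cpow ht0]
  push_cast; rfl

lemma fractMellin_ofReal_nonneg (a : ℝ) :
    0 ≤ ∫ t in Ioi (1 : ℝ), Int.fract t * t ^ (-(a + 1)) := by
  refine setIntegral_nonneg measurableSet_Ioi fun t ht ↦ ?_
  have ht0 : (0 : ℝ) ≤ t := (lt_trans zero_lt_one ht).le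
  exact mul_nonneg (Int.fract_nonneg t) (by positivity)

lemma norm_zetaReg_le_of_one_lt {s : ℂ} (hs : 1 < s.re) :
    ‖zetaReg s‖ ≤ ‖s - 1‖ * (1 + 1 / (s.re - 1)) := by
  have h1 : s ≠ 1 := by rintro rfl; simp at hs
  rw [zetaReg_eq (by linarith) h1, norm_mul]
  gcongr
  refine (norm_riemannZeta_le hs).trans ?_
  have h0 : (0 : ℝ) < s.re - 1 := by linarith
  have h := riemannZeta_eq_fractMellin (s := (s.re : ℂ)) (by simpa)
  rw [fractMellin_ofReal] at h
  set J := ∫ t in Ioi (1 : ℝ), Int.fract t * t ^ (-(s.re + 1)) with hJ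
  have hJ0 : 0 ≤ J := fractMellin_ofReal_nonneg _
  have hJ1 : J ≤ 1 / s.re := by
    have := norm_fractMellin_le (s := (s.re : ℂ)) (by simp; linarith)
    rw [fractMellin_ofReal, ← hJ, Complex.norm_real, Real.norm_of_nonneg hJ0] at this
    simpa using this
  have h2 : riemannZeta s.re = ((s.re * (1 - (s.re - 1) * J) / (s.re - 1) : ℝ) : ℂ) := by
    have : ((s.re : ℂ) - 1) ≠ 0 := by exact_mod_cast h0.ne'
    push_cast
    rw [eq_div_iff this, mul_comm, h]
  rw [h2, Complex.norm_real]
  have h3 : (s.re - 1) * J ≤ 1 := by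
    calc (s.re - 1) * J ≤ (s.re - 1) * (1 / s.re) := by gcongr
      _ ≤ 1 := by rw [mul_one_div, div_le_one (by linarith)]; linarith
  rw [Real.norm_of_nonneg (div_nonneg (mul_nonneg (by linarith) (by linarith)) h0.le)]
  rw [div_le_iff₀ h0]
  have : (1 + 1 / (s.re - 1)) * (s.re - 1) = s.re := by field_simp; ring
  rw [this]
  have : 0 ≤ (s.re - 1) * J := by positivity
  nlinarith

lemma le_zetaReg_ofReal {a : ℝ} (ha : 1 < a) : a - 1 ≤ ‖zetaReg a‖ := by
  have h1 : (a : ℂ) ≠ 1 := by exact_mod_cast ha.ne'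
  have ha' : 1 < (a : ℂ).re := by simpa
  rw [zetaReg_eq (by simp; linarith) h1, norm_mul, zeta_eq_tsum_one_div_nat_cpow ha']
  have e0 : ‖(a : ℂ) - 1‖ = a - 1 := by
    rw [← Complex.ofReal_one, ← Complex.ofReal_sub, Complex.norm_real,
      Real.norm_of_nonneg (by linarith)]
  have e : (fun n : ℕ ↦ (1 : ℂ) / (n : ℂ) ^ (a : ℂ))
      = fun n : ℕ ↦ (((1 / (n : ℝ) ^ a : ℝ)) : ℂ) := by
    ext n; rw [Complex.ofReal_div, Complex.ofReal_cpow (by positivity)]; simp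
  have hsum : Summable fun n : ℕ ↦ 1 / (n : ℝ) ^ a := Real.summable_one_div_nat_rpow.2 ha
  rw [e, ← Complex.ofReal_tsum, Complex.norm_real, e0, Real.norm_of_nonneg
    (tsum_nonneg fun n ↦ by positivity)]
  have := hsum.le_tsum 1 (fun n _ ↦ by positivity)
  simp only [Nat.cast_one, Real.one_rpow, div_one] at this
  nlinarith

/-- The `j`-th Taylor coefficient at the origin. -/
noncomputable def taylorCoeff (G : ℂ → ℂ) (j : ℕ) : ℂ := (j.factorial : ℂ)⁻¹ * iteratedDeriv j G 0

lemma taylorCoeff_eq_circleAverage {G : ℂ → ℂ} {r : ℝ} (hr : 0 < r)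
    (hG : DiffContOnCl ℂ G (Metric.ball 0 r)) (j : ℕ) :
    taylorCoeff G j = Real.circleAverage (fun z ↦ G z * (z ^ j)⁻¹) 0 r := by
  rw [Real.circleAverage_eq_circleIntegral hr.ne', taylorCoeff]
  have h := hG.circleIntegral_one_div_sub_center_pow_smul hr j
  have e : (∮ z in C(0, r), (z - 0)⁻¹ • (G z * (z ^ j)⁻¹))
      = ∮ z in C(0, r), (1 / (z - 0) ^ (j + 1)) • G z := by
    congr 1; ext z
    simp only [sub_zero, smul_eq_mul]
    rw [pow_succ, one_div, mul_inv]; ring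
  rw [e, h, smul_eq_mul, smul_eq_mul]
  have : (2 * Real.pi * Complex.I : ℂ) ≠ 0 := by simp
  field_simp

lemma circleAverage_mul_pow_eq_zero {G : ℂ → ℂ} {r : ℝ} (hr : 0 < r)
    (hG : DiffContOnCl ℂ G (Metric.ball 0 r)) {j : ℕ} (hj : 1 ≤ j) :
    Real.circleAverage (fun z ↦ G z * z ^ j) 0 r = 0 := by
  have h : DiffContOnCl ℂ (fun z ↦ G z * z ^ j) (Metric.ball 0 |r|) := by
    rw [abs_of_pos hr]
    exact hG.smul (differentiable_pow j).diffContOnCl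
  rw [h.circleAverage]
  simp; omega

lemma norm_circleAverage_le {f : ℂ → ℂ} {c : ℂ} {r : ℝ} :
    ‖Real.circleAverage f c r‖ ≤ Real.circleAverage (fun z ↦ ‖f z‖) c r := by
  rw [Real.circleAverage, Real.circleAverage, norm_smul, smul_eq_mul, Real.norm_of_nonneg
    (by positivity)]
  gcongr
  exact intervalIntegral.norm_integral_le_integral_norm (by positivity)

lemma taylorCoeff_mul_pow_le {G : ℂ → ℂ} {r : ℝ} (hr : 0 < r)
    (hG : DiffContOnCl ℂ G (Metric.ball 0 r)) {j : ℕ} (hj : 1 ≤ j) :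
    ‖taylorCoeff G j‖ * r ^ j ≤
      4 * Real.circleAverage (fun z ↦ max (G z).re 0) 0 r - 2 * (G 0).re := by
  have hc : ContinuousOn G (Metric.sphere 0 |r|) := by
    rw [abs_of_pos hr]
    exact hG.continuousOn_ball.mono Metric.sphere_subset_closedBall
  have hz0 : ∀ z ∈ Metric.sphere (0 : ℂ) |r|, z ≠ 0 := by
    intro z hz h0
    rw [h0] at hz
    simp at hz
    exact hr.ne (abs_eq_zero.1 hz.symm).symm
  have hci : ContinuousOn (fun z : ℂ ↦ (z ^ j)⁻¹) (Metric.sphere 0 |r|) :=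
    (continuousOn_pow j).inv₀ fun z hz ↦ pow_ne_zero _ (hz0 z hz)
  have h1 := taylorCoeff_eq_circleAverage hr hG j
  have h2 : Real.circleAverage (fun z ↦ (starRingEnd ℂ) (G z) * (z ^ j)⁻¹) 0 r = 0 := by
    have h3 := circleAverage_mul_pow_eq_zero hr hG hj
    have hint : CircleIntegrable (fun z ↦ G z * z ^ j) 0 r :=
      (hc.mul (continuousOn_pow j)).circleIntegrable'
    have h4 := Complex.conjCLE.toContinuousLinearMap.circleAverage_comp_comm hint
    rw [h3, _root_.map_zero] at h4
    have h5 : Real.circleAverage (fun z ↦ (starRingEnd ℂ) (G z) * (z ^ j)⁻¹) 0 r =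
        Real.circleAverage (((r ^ (2 * j))⁻¹ : ℝ) • (Complex.conjCLE.toContinuousLinearMap ∘
          fun z ↦ G z * z ^ j)) 0 r := by
      refine Real.circleAverage_congr_sphere fun z hz ↦ ?_
      have hz' := hz0 z hz
      have hzz : (starRingEnd ℂ) z * z = (r : ℂ) ^ 2 := by
        rw [Complex.conj_mul']
        simp only [mem_sphere_iff_norm, sub_zero] at hz
        rw [hz, ← Complex.ofReal_pow, ← Complex.ofReal_pow, sq_abs]
      have hr0 : (r : ℂ) ≠ 0 := by exact_mod_cast hr.ne'
      simp only [Pi.smul_apply, Function.comp, ContinuousLinearEquiv.coe_coe,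
        Complex.conjCLE_apply, map_mul, map_pow, Complex.real_smul]
      push_cast
      rw [pow_mul, ← hzz, mul_pow]
      have : (starRingEnd ℂ) z ≠ 0 := by simpa using hz'
      field_simp
    rw [h5, Real.circleAverage_smul, h4, smul_zero]
  have hcc : ContinuousOn (fun z ↦ (starRingEnd ℂ) (G z)) (Metric.sphere 0 |r|) :=
    Complex.continuous_conj.comp_continuousOn hc
  have h6 : taylorCoeff G j = Real.circleAverage
      (fun z ↦ ((2 * (G z).re : ℝ) : ℂ) * (z ^ j)⁻¹) 0 r := by
    have h9 := Real.circleAverage_fun_add (f₁ := fun z ↦ G z * (z ^ j)⁻¹)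
      (f₂ := fun z ↦ (starRingEnd ℂ) (G z) * (z ^ j)⁻¹)
      (hc.mul hci).circleIntegrable' (hcc.mul hci).circleIntegrable'
    rw [h2, add_zero, ← h1] at h9
    rw [← h9]
    congr 1; ext z
    rw [← add_mul, Complex.add_conj]
  have hre : ContinuousOn (fun z ↦ (G z).re) (Metric.sphere 0 |r|) :=
    Complex.continuous_re.comp_continuousOn hc
  have h7 : Real.circleAverage (fun z ↦ (G z).re) 0 r = (G 0).re := by
    have hG' : DiffContOnCl ℂ G (Metric.ball 0 |r|) := by rwa [abs_of_pos hr]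
    have := Complex.reCLM.circleAverage_comp_comm hc.circleIntegrable'
    rw [hG'.circleAverage] at this
    exact this
  have h8 : ‖taylorCoeff G j‖ ≤ Real.circleAverage
      (fun z ↦ (r ^ j)⁻¹ • (4 * max (G z).re 0 - 2 * (G z).re)) 0 r := by
    rw [h6]
    refine norm_circleAverage_le.trans (le_of_eq (Real.circleAverage_congr_sphere fun z hz ↦ ?_))
    simp only [mem_sphere_iff_norm, sub_zero] at hz
    simp only [norm_mul, norm_inv, norm_pow, hz, abs_of_pos hr, Complex.norm_real, smul_eq_mul]
    rw [mul_comm]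
    congr 1
    simp only [Real.norm_eq_abs, abs_two]
    rcases le_total 0 (G z).re with h | h
    · rw [abs_of_nonneg h, max_eq_left h]; ring
    · rw [abs_of_nonpos h, max_eq_right h]; ring
  rw [Real.circleAverage_fun_smul, Real.circleAverage_fun_sub, smul_eq_mul] at h8
  · have e1 : Real.circleAverage (fun z ↦ 4 * max (G z).re 0) 0 r =
        4 * Real.circleAverage (fun z ↦ max (G z).re 0) 0 r :=
      Real.circleAverage_fun_smul (a := (4 : ℝ))
    have e2 : Real.circleAverage (fun z ↦ 2 * (G z).re) 0 r = 2 * (G 0).re := by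
      rw [← h7]; exact Real.circleAverage_fun_smul (a := (2 : ℝ))
    rw [e1, e2] at h8
    rwa [inv_mul_eq_div, le_div_iff₀ (by positivity)] at h8
  · exact (continuousOn_const.mul (hre.sup continuousOn_const)).circleIntegrable'
  · exact (continuousOn_const.mul hre).circleIntegrable'

lemma taylorCoeff_mul_pow_le_of_lt {G : ℂ → ℂ} {R r₀ Θ : ℝ} (hr₀ : 0 ≤ r₀) (hR : r₀ < R)
    (hG : DifferentiableOn ℂ G (Metric.ball 0 R)) {j : ℕ} (hj : 1 ≤ j)
    (h : ∀ r ∈ Ioo r₀ R,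
      4 * Real.circleAverage (fun z ↦ max (G z).re 0) 0 r - 2 * (G 0).re ≤ Θ) :
    ‖taylorCoeff G j‖ * R ^ j ≤ Θ := by
  have hlim : Tendsto (fun r : ℝ ↦ ‖taylorCoeff G j‖ * r ^ j) (𝓝[<] R)
      (𝓝 (‖taylorCoeff G j‖ * R ^ j)) :=
    ((continuous_const.mul (continuous_pow j)).tendsto R).mono_left nhdsWithin_le_nhds
  refine le_of_tendsto hlim ?_
  filter_upwards [Ioo_mem_nhdsLT hR] with r hr
  refine (taylorCoeff_mul_pow_le (hr₀.trans_lt hr.1) ?_ hj).trans (h r hr)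
  exact (hG.mono ((Metric.closure_ball_subset_closedBall).trans
    (Metric.closedBall_subset_ball hr.2))).diffContOnCl

lemma exists_exp_eq_of_ne_zero {F : ℂ → ℂ} {R : ℝ} (hF : DifferentiableOn ℂ F (Metric.ball 0 R))
    (h0 : ∀ w ∈ Metric.ball (0 : ℂ) R, F w ≠ 0) (hR : 0 < R) :
    ∃ G : ℂ → ℂ, DifferentiableOn ℂ G (Metric.ball 0 R) ∧
      ∀ w ∈ Metric.ball (0 : ℂ) R, Complex.exp (G w) = F w := by
  have hop : IsOpen (Metric.ball (0 : ℂ) R) := Metric.isOpen_ball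
  have hd : DifferentiableOn ℂ (fun w ↦ deriv F w / F w) (Metric.ball 0 R) :=
    (hF.deriv hop).div hF h0
  obtain ⟨g, hg⟩ := hd.isExactOn_ball
  have h0m : (0 : ℂ) ∈ Metric.ball (0 : ℂ) R := Metric.mem_ball_self hR
  have hderiv : ∀ w ∈ Metric.ball (0 : ℂ) R,
      HasDerivAt (fun w ↦ F w * Complex.exp (-g w)) 0 w := by
    intro w hw
    have h1 := ((hF w hw).differentiableAt (hop.mem_nhds hw)).hasDerivAt
    have h2 := h1.mul (hg w hw).neg.cexp
    refine h2.congr_deriv ?_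
    have := h0 w hw
    simp only [Pi.neg_apply]
    field_simp
    ring
  have hconst : ∀ w ∈ Metric.ball (0 : ℂ) R,
      F w * Complex.exp (-g w) = F 0 * Complex.exp (-g 0) := by
    intro w hw
    refine hop.is_const_of_deriv_eq_zero (f := fun w ↦ F w * Complex.exp (-g w))
      (convex_ball 0 R).isPreconnected ?_ ?_ hw h0m
    · exact fun z hz ↦ (hderiv z hz).differentiableAt.differentiableWithinAt
    · exact fun z hz ↦ (hderiv z hz).deriv
  refine ⟨fun w ↦ g w + (Complex.log (F 0) - g 0), ?_, ?_⟩
  · exact fun z hz ↦ ((hg z hz).differentiableAt.add_const _).differentiableWithinAt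
  · intro w hw
    have h1 := hconst w hw
    rw [Complex.exp_add, Complex.exp_sub, Complex.exp_log (h0 0 h0m)]
    rw [Complex.exp_neg, Complex.exp_neg] at h1
    have := Complex.exp_ne_zero (g w)
    have := Complex.exp_ne_zero (g 0)
    field_simp at h1 ⊢
    linear_combination -h1

/-- A zero-free holomorphic function recentred at `1 + σ`, normalised to be bounded. -/
noncomputable def zetaNorm (σ : ℝ) (w : ℂ) : ℂ := zetaReg (1 + σ - w) / (σ - w + 10)

section
variable {σ : ℝ}

lemma re_lt_of_mem_ball {w : ℂ} {R : ℝ} (hw : w ∈ Metric.ball (0 : ℂ) R) : w.re < R := by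
  have h1 := Complex.re_le_norm w
  rw [mem_ball_zero_iff] at hw
  linarith

lemma add_ten_ne_zero {w : ℂ} (hw : w.re < σ + 1 / 2) : (σ : ℂ) - w + 10 ≠ 0 := by
  intro h
  have := congrArg Complex.re h
  simp at this
  linarith

lemma differentiableOn_zetaNorm :
    DifferentiableOn ℂ (zetaNorm σ) (Metric.ball 0 (σ + 1 / 2)) := by
  intro w hw
  have hw := re_lt_of_mem_ball hw
  have h1 : DifferentiableAt ℂ zetaReg (1 + σ - w) :=
    differentiableAt_zetaReg (by simp; linarith)
  have h2 : DifferentiableAt ℂ (fun w : ℂ ↦ zetaReg (1 + σ - w)) w :=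
    h1.comp w (by fun_prop)
  have h3 : DifferentiableAt ℂ (fun w : ℂ ↦ (σ : ℂ) - w + 10) w := by fun_prop
  exact (h2.div h3 (add_ten_ne_zero hw)).differentiableWithinAt

lemma zetaNorm_ne_zero (hRH : RiemannHypothesis) {w : ℂ} (hw : w.re < σ + 1 / 2) :
    zetaNorm σ w ≠ 0 := by
  refine div_ne_zero (zetaReg_ne_zero hRH ?_) (add_ten_ne_zero hw)
  simp; linarith

lemma le_norm_add_ten {z : ℂ} (hz : -(1 / 2) < z.re) : ‖z‖ ≤ ‖z + 10‖ ∧ ‖z + 1‖ ≤ ‖z + 10‖ := by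
  constructor <;>
  · rw [Complex.norm_def, Complex.norm_def]
    apply Real.sqrt_le_sqrt
    rw [Complex.normSq_apply, Complex.normSq_apply]
    simp
    nlinarith

lemma norm_zetaNorm_le (hσ : 0 < σ) {w : ℂ} {r : ℝ} (hr : r < σ + 1 / 2) (hσr : σ < r)
    (hw : ‖w‖ = r) : ‖zetaNorm σ w‖ ≤ 1 + √(1 + σ) := by
  have hre : w.re < σ + 1 / 2 := (Complex.re_le_norm w).trans_lt (hw ▸ hr)
  have hs : (0 : ℝ) < (1 + σ - w : ℂ).re := by simp; linarith
  have h10 := le_norm_add_ten (z := σ - w) (by simp; linarith)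
  have hpos : 0 < ‖(σ : ℂ) - w + 10‖ := norm_pos_iff.2 (add_ten_ne_zero hre)
  have h1 := norm_zetaReg_le hs
  rw [zetaNorm, norm_div, div_le_iff₀ hpos]
  refine h1.trans ?_
  rw [mul_comm]
  have e1 : (1 + σ - w : ℂ) = σ - w + 1 := by ring
  have e2 : (1 + σ - w - 1 : ℂ) = σ - w := by ring
  have e3 : (1 + σ - w : ℂ).re = 1 + σ - w.re := by simp
  rw [e2, e3]
  have key : ‖(σ : ℂ) - w‖ / (1 + σ - w.re) ≤ √(1 + σ) := by
    rw [e3] at hs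
    rw [div_le_iff₀ hs]
    refine abs_le_of_sq_le_sq' ?_ (by positivity) |>.2
    rw [mul_pow, Real.sq_sqrt (by linarith), ← Complex.normSq_eq_norm_sq, Complex.normSq_apply]
    have h3 : w.re ^ 2 + w.im ^ 2 = r ^ 2 := by
      rw [← hw, ← Complex.normSq_eq_norm_sq, Complex.normSq_apply]; ring
    simp only [Complex.sub_re, Complex.ofReal_re, Complex.sub_im, Complex.ofReal_im]
    have hv : w.re ≤ r := hw ▸ Complex.re_le_norm w
    set v := r - w.re with hv'
    have hw' : w.re = r - v := by rw [hv']; ring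
    have ha : 1 / 2 + v ≤ 1 + σ - w.re := by rw [hw']; linarith
    have hv0 : 0 ≤ v := by linarith
    have hsq : (1 / 2 + v) ^ 2 ≤ (1 + σ - w.re) ^ 2 := by gcongr
    calc _ = (r - σ) ^ 2 + 2 * σ * v := by rw [hv']; linear_combination h3
      _ ≤ (1 / 2) ^ 2 + 2 * σ * v := by gcongr; linarith
      _ ≤ (1 + σ) * (1 / 2 + v) ^ 2 := by nlinarith [mul_nonneg hσ.le (sq_nonneg (1 / 2 - v))]
      _ ≤ _ := by gcongr
  have h5 : ‖(1 + σ - w : ℂ)‖ ≤ ‖(σ : ℂ) - w + 10‖ := by rw [e1]; exact h10.2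
  have h6 : 0 ≤ ‖(σ : ℂ) - w‖ / (1 + σ - w.re) := div_nonneg (norm_nonneg _) (e3 ▸ hs.le)
  exact mul_le_mul (by linarith) h5 (norm_nonneg _) (by positivity)

lemma norm_zetaNorm_le_of_lt {w : ℂ} {r : ℝ} (hr : r < σ + 1 / 2)
    (hw : 1 / 2 < r - w.re) : ‖zetaNorm σ w‖ ≤ 1 + 1 / (r - w.re - 1 / 2) := by
  have hre : w.re < σ + 1 / 2 := by linarith
  have hs : (1 : ℝ) < (1 + σ - w : ℂ).re := by simp; linarith
  have h10 := le_norm_add_ten (z := σ - w) (by simp; linarith)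
  have hpos : 0 < ‖(σ : ℂ) - w + 10‖ := norm_pos_iff.2 (add_ten_ne_zero hre)
  have h1 := norm_zetaReg_le_of_one_lt hs
  rw [zetaNorm, norm_div, div_le_iff₀ hpos]
  refine h1.trans ?_
  rw [mul_comm]
  have e2 : (1 + σ - w - 1 : ℂ) = σ - w := by ring
  have e3 : (1 + σ - w : ℂ).re - 1 = σ - w.re := by simp; ring
  rw [e2, e3]
  have : 1 / (σ - w.re) ≤ 1 / (r - w.re - 1 / 2) := by
    apply one_div_le_one_div_of_le <;> linarith
  have h0 : 0 < 1 / (σ - w.re) := by apply one_div_pos.2; linarith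
  exact mul_le_mul (by linarith) h10.1 (norm_nonneg _) (by linarith)

end

/-- An upper bound for the mean of the positive part of `log |zetaNorm σ|` over circles. -/
noncomputable def meanBound (σ : ℝ) : ℝ :=
  (11 / 6 * (Real.log (1 + √(1 + σ)) + 1) / √σ + 11 / σ) / Real.pi

section
variable {σ : ℝ}

lemma log_norm_zetaNorm_le (hσ : 0 < σ) {w : ℂ} {r : ℝ} (hr : r < σ + 1 / 2) (hσr : σ < r)
    (hw : ‖w‖ = r) : Real.log ‖zetaNorm σ w‖ ≤ Real.log (1 + √(1 + σ)) := by
  rcases eq_or_lt_of_le (norm_nonneg (zetaNorm σ w)) with h | h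
  · rw [← h, Real.log_zero]
    exact Real.log_nonneg (by simp)
  · exact Real.log_le_log h (norm_zetaNorm_le hσ hr hσr hw)

lemma log_norm_zetaNorm_le_of_lt {w : ℂ} {r : ℝ} (hr : r < σ + 1 / 2)
    (hw : 1 / 2 < r - w.re) : Real.log ‖zetaNorm σ w‖ ≤ 1 / (r - w.re - 1 / 2) := by
  have h0 : 0 < 1 / (r - w.re - 1 / 2) := one_div_pos.2 (by linarith)
  rcases eq_or_lt_of_le (norm_nonneg (zetaNorm σ w)) with h | h
  · rw [← h, Real.log_zero]
    exact h0.le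
  · refine (Real.log_le_sub_one_of_pos h).trans ?_
    have := norm_zetaNorm_le_of_lt hr hw
    linarith

lemma sq_mul_le_one_sub_cos {τ : ℝ} (h0 : 0 ≤ τ) (h1 : τ ≤ 1) :
    43 / 96 * τ ^ 2 ≤ 1 - Real.cos τ := by
  have h := (abs_le.1 (Real.cos_bound (x := τ) (by rwa [abs_of_nonneg h0]))).2
  rw [abs_of_nonneg h0] at h
  have : τ ^ 4 ≤ τ ^ 2 := pow_le_pow_of_le_one h0 h1 (by norm_num)
  nlinarith

lemma one_fifth_le_one_sub_cos {τ : ℝ} (h1 : 1 ≤ τ) (hpi : τ ≤ Real.pi) :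
    1 / 5 ≤ 1 - Real.cos τ := by
  have h := Real.cos_le_one_sub_mul_cos_sq (x := τ) (by rwa [abs_of_nonneg (by linarith)])
  have h2 : (1 : ℝ) / 5 ≤ 2 / Real.pi ^ 2 := by
    rw [div_le_div_iff₀ (by norm_num) (by positivity)]
    nlinarith [Real.pi_lt_d2, Real.pi_pos]
  have h3 : 2 / Real.pi ^ 2 * 1 ≤ 2 / Real.pi ^ 2 * τ ^ 2 := by
    gcongr; nlinarith
  linarith

lemma integral_le_of_cos_bound (hσ : 1000 ≤ σ) {u : ℝ → ℝ} {r M : ℝ} (hσr : σ < r)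
    (hu : Continuous u) (hM : ∀ τ ∈ Icc 0 Real.pi, u τ ≤ M)
    (hc : ∀ τ ∈ Icc 0 Real.pi, 1 / 2 < r * (1 - Real.cos τ) →
      u τ ≤ 1 / (r * (1 - Real.cos τ) - 1 / 2)) :
    ∫ τ in 0..Real.pi, u τ ≤ 11 / 6 * (M + 1) / √σ + 11 / σ := by
  have hσ0 : 0 < σ := by linarith
  have hs0 : 0 < √σ := Real.sqrt_pos.2 hσ0
  have hs30 : 30 ≤ √σ := Real.le_sqrt_of_sq_le (by linarith)
  have hss : √σ ^ 2 = σ := Real.sq_sqrt hσ0.le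
  set t := 11 / 6 / √σ with ht
  have ht0 : 0 < t := by positivity
  have ht1 : t ≤ 1 := by rw [ht, div_le_one hs0]; linarith
  have hp1 : 1 ≤ Real.pi := by linarith [Real.pi_gt_three]
  have hσt : σ * t ^ 2 = (11 / 6) ^ 2 := by rw [ht, div_pow, hss]; field_simp
  have hi : ∀ a b : ℝ, IntervalIntegrable u volume a b := fun a b ↦ hu.intervalIntegrable a b
  rw [← intervalIntegral.integral_add_adjacent_intervals (hi 0 t) (hi t Real.pi),
    ← intervalIntegral.integral_add_adjacent_intervals (hi t 1) (hi 1 Real.pi)]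
  have I1 : ∫ τ in 0..t, u τ ≤ 11 / 6 * M / √σ := by
    calc ∫ τ in 0..t, u τ ≤ ∫ τ in 0..t, M := by
          refine intervalIntegral.integral_mono_on ht0.le (hi 0 t) (by simp) fun τ hτ ↦ ?_
          exact hM τ ⟨hτ.1, by linarith [hτ.2]⟩
      _ = 11 / 6 * M / √σ := by
          rw [intervalIntegral.integral_const, ht, smul_eq_mul]; ring
  have I2 : ∫ τ in t..1, u τ ≤ 11 / 6 / √σ := by
    have hint : IntervalIntegrable (fun τ : ℝ ↦ 335 / 100 / σ * (τ ^ 2)⁻¹) volume t 1 := by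
      refine ContinuousOn.intervalIntegrable ?_
      rw [uIcc_of_le ht1]
      exact continuousOn_const.mul ((continuousOn_pow 2).inv₀ fun τ hτ ↦
        pow_ne_zero _ (ht0.trans_le hτ.1).ne')
    calc ∫ τ in t..1, u τ ≤ ∫ τ in t..1, 335 / 100 / σ * (τ ^ 2)⁻¹ := by
          refine intervalIntegral.integral_mono_on ht1 (hi t 1) hint fun τ hτ ↦ ?_
          have hτ0 : 0 < τ := ht0.trans_le hτ.1
          have h1 := sq_mul_le_one_sub_cos hτ0.le hτ.2
          have h2 : σ * t ^ 2 ≤ σ * τ ^ 2 := by gcongr; exact hτ.1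
          have h3 : σ * (43 / 96 * τ ^ 2) ≤ r * (1 - Real.cos τ) := by gcongr; linarith
          have h4 : 0 < σ * τ ^ 2 := by positivity
          refine (hc τ ⟨hτ0.le, hτ.2.trans hp1⟩ (by nlinarith)).trans ?_
          have h5 : 335 / 100 / σ * (τ ^ 2)⁻¹ = 335 / 100 / (σ * τ ^ 2) := by field_simp
          rw [h5, div_le_div_iff₀ (by nlinarith) h4]
          nlinarith
      _ = 335 / 100 / σ * (t⁻¹ - 1) := by
          rw [intervalIntegral.integral_const_mul]
          congr 1
          have := integral_zpow (a := t) (b := 1) (n := -2)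
            (Or.inr ⟨by norm_num, by rw [uIcc_of_le ht1]; exact fun h ↦ absurd h.1 (by linarith)⟩)
          have e : ∀ τ : ℝ, (τ ^ 2)⁻¹ = τ ^ (-2 : ℤ) := fun τ ↦ by
            rw [zpow_neg]; rfl
          simp_rw [e, this]
          norm_num
          ring
      _ ≤ 335 / 100 / σ * t⁻¹ := by gcongr; linarith [inv_pos.2 ht0]
      _ = 335 * 6 / 1100 / √σ := by
          rw [ht]; nth_rewrite 1 [← hss]; field_simp; norm_num
      _ ≤ 11 / 6 / √σ := by gcongr ?_ / _; norm_num
  have I3 : ∫ τ in 1..Real.pi, u τ ≤ 11 / σ := by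
    calc ∫ τ in 1..Real.pi, u τ ≤ ∫ τ in 1..Real.pi, 51 / 10 / σ := by
          refine intervalIntegral.integral_mono_on hp1 (hi 1 _) (by simp) fun τ hτ ↦ ?_
          have h1 := one_fifth_le_one_sub_cos hτ.1 hτ.2
          have h3 : σ * (1 / 5) ≤ r * (1 - Real.cos τ) := by gcongr; linarith
          refine (hc τ ⟨by linarith [hτ.1], hτ.2⟩ (by nlinarith)).trans ?_
          rw [div_le_div_iff₀ (by nlinarith) hσ0]
          nlinarith
      _ = (Real.pi - 1) * (51 / 10) / σ := by
          rw [intervalIntegral.integral_const, smul_eq_mul]; ring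
      _ ≤ 11 / σ := by gcongr; linarith [Real.pi_lt_d2]
  calc _ ≤ 11 / 6 * M / √σ + (11 / 6 / √σ + 11 / σ) := by gcongr
    _ = _ := by ring

lemma circleAverage_le_meanBound (hσ : 1000 ≤ σ) {G : ℂ → ℂ}
    (hG : DifferentiableOn ℂ G (Metric.ball 0 (σ + 1 / 2)))
    (hexp : ∀ w ∈ Metric.ball (0 : ℂ) (σ + 1 / 2), Complex.exp (G w) = zetaNorm σ w)
    {r : ℝ} (hr : r ∈ Ioo σ (σ + 1 / 2)) :
    Real.circleAverage (fun z ↦ max (G z).re 0) 0 r ≤ meanBound σ := by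
  have hσ0 : 0 < σ := by linarith
  have hr0 : 0 < r := hσ0.trans hr.1
  have hnorm : ∀ τ, ‖circleMap 0 r τ‖ = r := fun τ ↦ by simp [abs_of_pos hr0]
  have hmem : ∀ τ, circleMap 0 r τ ∈ Metric.ball (0 : ℂ) (σ + 1 / 2) := fun τ ↦ by
    rw [mem_ball_zero_iff, hnorm]; exact hr.2
  have hre : ∀ τ, (circleMap 0 r τ).re = r * Real.cos τ := fun τ ↦ by
    simp [circleMap, Complex.exp_ofReal_mul_I_re]
  have hlog : ∀ τ, (G (circleMap 0 r τ)).re = Real.log ‖zetaNorm σ (circleMap 0 r τ)‖ :=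
    fun τ ↦ by rw [← hexp _ (hmem τ), Complex.norm_exp, Real.log_exp]
  let u : ℝ → ℝ := fun τ ↦ max (G (circleMap 0 r τ)).re 0
  have hu : Continuous u := by
    refine (Complex.continuous_re.comp ?_).sup continuous_const
    exact hG.continuousOn.comp_continuous (continuous_circleMap 0 r) hmem
  have hM : ∀ τ, u τ ≤ Real.log (1 + √(1 + σ)) := fun τ ↦ by
    refine max_le ?_ (Real.log_nonneg (by simp))
    rw [hlog]
    exact log_norm_zetaNorm_le hσ0 hr.2 hr.1 (hnorm τ)
  have hc : ∀ τ, 1 / 2 < r * (1 - Real.cos τ) → u τ ≤ 1 / (r * (1 - Real.cos τ) - 1 / 2) :=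
    fun τ hτ ↦ by
    refine max_le ?_ (one_div_nonneg.2 (by linarith))
    rw [hlog]
    have e : r * (1 - Real.cos τ) = r - (circleMap 0 r τ).re := by rw [hre]; ring
    rw [e] at hτ ⊢
    exact log_norm_zetaNorm_le_of_lt hr.2 hτ
  have J1 := integral_le_of_cos_bound hσ hr.1 hu (fun τ _ ↦ hM τ) (fun τ _ ↦ hc τ)
  have J2 := integral_le_of_cos_bound hσ hr.1 (u := fun τ ↦ u (2 * Real.pi - τ))
    (hu.comp (by fun_prop)) (fun τ _ ↦ hM _) (fun τ _ h ↦ by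
      have := hc (2 * Real.pi - τ)
      rw [Real.cos_two_pi_sub] at this
      exact this h)
  rw [intervalIntegral.integral_comp_sub_left u] at J2
  have e : Real.circleAverage (fun z ↦ max (G z).re 0) 0 r
      = (2 * Real.pi)⁻¹ * ((∫ τ in 0..Real.pi, u τ) + ∫ τ in Real.pi..(2 * Real.pi), u τ) := by
    rw [intervalIntegral.integral_add_adjacent_intervals (hu.intervalIntegrable _ _)
      (hu.intervalIntegrable _ _)]
    rfl
  have e2 : 2 * Real.pi - Real.pi = Real.pi := by ring
  rw [e2, sub_zero] at J2
  rw [e, meanBound, inv_mul_eq_div, div_le_div_iff₀ (by positivity) Real.pi_pos]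
  nlinarith [Real.pi_pos]

lemma exists_log_zetaNorm (hRH : RiemannHypothesis) (hσ : 1000 ≤ σ) :
    ∃ G : ℂ → ℂ, DifferentiableOn ℂ G (Metric.ball 0 (σ + 1 / 2)) ∧
      (∀ w ∈ Metric.ball (0 : ℂ) (σ + 1 / 2), Complex.exp (G w) = zetaNorm σ w) ∧
      ∀ j, 1 ≤ j → ‖taylorCoeff G j‖ * (σ + 1 / 2) ^ j ≤ 4 * meanBound σ + 20 / σ := by
  have hσ0 : 0 < σ := by linarith
  obtain ⟨G, hG, hexp⟩ := exists_exp_eq_of_ne_zero (differentiableOn_zetaNorm (σ := σ))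
    (fun w hw ↦ zetaNorm_ne_zero hRH (re_lt_of_mem_ball hw)) (by linarith)
  refine ⟨G, hG, hexp, fun j hj ↦ ?_⟩
  refine taylorCoeff_mul_pow_le_of_lt hσ0.le (by linarith) hG hj fun r hr ↦ ?_
  have h1 := circleAverage_le_meanBound hσ hG hexp hr
  have h0 : (G 0).re = Real.log ‖zetaNorm σ 0‖ := by
    rw [← hexp 0 (Metric.mem_ball_self (by linarith)), Complex.norm_exp, Real.log_exp]
  have h2 : σ / (σ + 10) ≤ ‖zetaNorm σ 0‖ := by
    have := le_zetaReg_ofReal (a := 1 + σ) (by linarith)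
    rw [zetaNorm, norm_div]
    have e : ‖(σ : ℂ) - 0 + 10‖ = σ + 10 := by
      rw [sub_zero]
      have : ((σ : ℂ) + 10) = ((σ + 10 : ℝ) : ℂ) := by push_cast; rfl
      rw [this, Complex.norm_real, Real.norm_of_nonneg (by linarith)]
    rw [e]
    gcongr
    push_cast at this
    simpa using this
  have h3 : -(10 / σ) ≤ (G 0).re := by
    rw [h0]
    have h4 := Real.log_le_log (by positivity) h2
    have h5 := Real.one_sub_inv_le_log_of_pos (x := σ / (σ + 10)) (by positivity)
    have h6 : 1 - (σ / (σ + 10))⁻¹ = -(10 / σ) := by field_simp; ring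
    linarith
  have : 20 / σ = 2 * (10 / σ) := by ring
  linarith
end

section
variable {σ : ℝ}

lemma iteratedDeriv_inv_const_sub (m : ℕ) (c : ℂ) :
    iteratedDeriv m (fun w ↦ (c - w)⁻¹) 0 = m.factorial / c ^ (m + 1) := by
  have h := congrFun (iteratedDeriv_comp_const_sub (n := m) (f := fun z : ℂ ↦ z⁻¹) (s := c)) 0
  rw [h, sub_zero, iteratedDeriv_eq_iterate]
  have h2 := iter_deriv_inv (𝕜 := ℂ) m c
  have e : (fun z : ℂ ↦ z⁻¹) = Inv.inv := rfl
  rw [e, h2, smul_eq_mul, ← mul_assoc, ← mul_assoc, ← mul_pow]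
  have e2 : (-1 - m : ℤ) = -((m + 1 : ℕ) : ℤ) := by push_cast; ring
  rw [e2, zpow_neg, zpow_natCast]
  simp [div_eq_mul_inv]

lemma abscissaOfAbsConv_vonMangoldt_le : LSeries.abscissaOfAbsConv (fun n ↦ (Λ n : ℂ)) ≤ 1 := by
  refine LSeries.abscissaOfAbsConv_le_of_forall_lt_LSeriesSummable (x := 1) fun y hy ↦ ?_
  exact LSeriesSummable_vonMangoldt (by simpa using hy)

lemma deriv_eq_logDeriv_of_exp_eq {F G : ℂ → ℂ} {s : Set ℂ} (hs : IsOpen s)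
    (hG : DifferentiableOn ℂ G s) (hexp : ∀ w ∈ s, Complex.exp (G w) = F w) {w : ℂ} (hw : w ∈ s)
    {F' : ℂ} (hF : HasDerivAt F F' w) : deriv G w = F' / F w := by
  have h1 := ((hG w hw).differentiableAt (hs.mem_nhds hw)).hasDerivAt.cexp
  have h2 : (fun w ↦ Complex.exp (G w)) =ᶠ[𝓝 w] F := by
    filter_upwards [hs.mem_nhds hw] with z hz using hexp z hz
  have h3 := (h1.congr_of_eventuallyEq h2.symm).unique hF
  rw [← h3, hexp w hw, mul_div_cancel_left₀]
  rw [← hexp w hw]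
  exact Complex.exp_ne_zero _

lemma deriv_log_zetaNorm {G : ℂ → ℂ} (hG : DifferentiableOn ℂ G (Metric.ball 0 (σ + 1 / 2)))
    (hexp : ∀ w ∈ Metric.ball (0 : ℂ) (σ + 1 / 2), Complex.exp (G w) = zetaNorm σ w)
    {w : ℂ} (hw : w ∈ Metric.ball (0 : ℂ) σ) :
    deriv G w = LSeries (fun n ↦ (Λ n : ℂ)) (1 + σ - w) - (σ - w)⁻¹ + (((σ : ℂ) + 10) - w)⁻¹ := by
  have hre := re_lt_of_mem_ball hw
  have hw' : w ∈ Metric.ball (0 : ℂ) (σ + 1 / 2) := Metric.ball_subset_ball (by linarith) hw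
  have hre1 : 1 < (1 + σ - w : ℂ).re := by simp; linarith
  have hne1 : (1 + σ - w : ℂ) ≠ 1 := by rintro h; rw [h] at hre1; simp at hre1
  have hne0 : (σ - w : ℂ) ≠ 0 := by
    intro h
    have := congrArg Complex.re h
    simp at this; linarith
  have hne10 := add_ten_ne_zero (w := w) (σ := σ) (by linarith)
  have hz := riemannZeta_ne_zero_of_one_lt_re hre1
  have hd1 : HasDerivAt (fun w : ℂ ↦ riemannZeta (1 + σ - w))
      (-deriv riemannZeta (1 + σ - w)) w :=
    HasDerivAt.comp_const_sub (1 + σ : ℂ) w (differentiableAt_riemannZeta hne1).hasDerivAt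
  have hd2 : HasDerivAt (fun w : ℂ ↦ (σ : ℂ) - w) (-1) w := by
    simpa using (hasDerivAt_id w).const_sub (σ : ℂ)
  have hd := (hd2.mul hd1).div (hd2.add_const 10) hne10
  have heq : (zetaNorm σ) =ᶠ[𝓝 w]
      (fun w : ℂ ↦ ((σ : ℂ) - w) * riemannZeta (1 + σ - w) / (σ - w + 10)) := by
    filter_upwards [Metric.isOpen_ball.mem_nhds hw] with z hz
    have hre := re_lt_of_mem_ball hz
    have hre1 : 1 < (1 + σ - z : ℂ).re := by simp; linarith
    have hne1 : (1 + σ - z : ℂ) ≠ 1 := by rintro h; rw [h] at hre1; simp at hre1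
    rw [zetaNorm, zetaReg_eq (by linarith) hne1]
    congr 2; ring
  have h := deriv_eq_logDeriv_of_exp_eq Metric.isOpen_ball hG hexp hw'
    (hd.congr_of_eventuallyEq heq)
  rw [h, heq.eq_of_nhds, LSeries_vonMangoldt_eq_deriv_riemannZeta_div hre1]
  have e : (σ : ℂ) + 10 - w = σ - w + 10 := by ring
  rw [e]
  simp only [Pi.mul_apply]
  field_simp
  ring

lemma iteratedDeriv_log_zetaNorm (hσ : 0 < σ) {G : ℂ → ℂ}
    (hG : DifferentiableOn ℂ G (Metric.ball 0 (σ + 1 / 2)))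
    (hexp : ∀ w ∈ Metric.ball (0 : ℂ) (σ + 1 / 2), Complex.exp (G w) = zetaNorm σ w) (m : ℕ) :
    iteratedDeriv (m + 1) G 0 = LSeries (LSeries.logMul^[m] (fun n ↦ (Λ n : ℂ))) (1 + σ)
      - m.factorial / (σ : ℂ) ^ (m + 1) + m.factorial / ((σ : ℂ) + 10) ^ (m + 1) := by
  have hσc : (σ : ℂ) ≠ 0 := by exact_mod_cast hσ.ne'
  have hσc10 : (σ : ℂ) + 10 ≠ 0 := by
    have : σ + 10 ≠ 0 := by linarith
    exact_mod_cast this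
  have habs : LSeries.abscissaOfAbsConv (fun n ↦ (Λ n : ℂ)) < (1 + σ : ℂ).re := by
    refine abscissaOfAbsConv_vonMangoldt_le.trans_lt ?_
    simp only [Complex.add_re, Complex.one_re, Complex.ofReal_re]
    exact_mod_cast (by linarith : (1 : ℝ) < 1 + σ)
  have h1 : deriv G =ᶠ[𝓝 0] fun w ↦ LSeries (fun n ↦ (Λ n : ℂ)) (1 + σ - w) - (σ - w)⁻¹
      + (((σ : ℂ) + 10) - w)⁻¹ := by
    filter_upwards [Metric.ball_mem_nhds (0 : ℂ) hσ] with w hw using deriv_log_zetaNorm hG hexp hw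
  have hc1 : ContDiffAt ℂ m (fun w : ℂ ↦ LSeries (fun n ↦ (Λ n : ℂ)) (1 + σ - w)) 0 := by
    have ha := (LSeries_analyticOnNhd (fun n ↦ (Λ n : ℂ))) (1 + σ - 0 : ℂ) (by simpa using habs)
    exact (ha.contDiffAt (n := m)).comp (0 : ℂ) (by fun_prop)
  have hc2 : ContDiffAt ℂ m (fun w : ℂ ↦ ((σ : ℂ) - w)⁻¹) 0 :=
    ContDiffAt.inv (by fun_prop) (by simpa using hσc)
  have hc3 : ContDiffAt ℂ m (fun w : ℂ ↦ ((σ : ℂ) + 10 - w)⁻¹) 0 :=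
    ContDiffAt.inv (by fun_prop) (by simpa using hσc10)
  rw [iteratedDeriv_succ', h1.iteratedDeriv_eq, iteratedDeriv_fun_add (hc1.sub hc2) hc3,
    iteratedDeriv_fun_sub hc1 hc2, iteratedDeriv_inv_const_sub,
    iteratedDeriv_inv_const_sub]
  have h2 := congrFun (iteratedDeriv_comp_const_sub (n := m)
    (f := LSeries (fun n ↦ (Λ n : ℂ))) (s := 1 + σ)) 0
  rw [h2, sub_zero, LSeries_iteratedDeriv m habs, smul_eq_mul, ← mul_assoc, ← mul_pow]
  simp
end

section
variable {σ : ℝ}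

/-- The Taylor coefficients of `G''`, scaled so that they add up to `G'' σ`. -/
noncomputable def scaledCoeff (σ : ℝ) (G : ℂ → ℂ) (i : ℕ) : ℝ :=
  (((i.factorial : ℂ)⁻¹ * σ ^ i * iteratedDeriv (i + 2) G 0)).re

lemma iterate_logMul_apply (f : ℕ → ℂ) (m n : ℕ) :
    LSeries.logMul^[m] f n = (Real.log n : ℂ) ^ m * f n := by
  induction m with
  | zero => simp
  | succ m ih =>
    rw [Function.iterate_succ', Function.comp_apply, LSeries.logMul, ih, ← Complex.natCast_log]
    ring

lemma hasSum_vonMangoldt_mul_pow (hσ : 0 < σ) {G : ℂ → ℂ}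
    (hG : DifferentiableOn ℂ G (Metric.ball 0 (σ + 1 / 2)))
    (hexp : ∀ w ∈ Metric.ball (0 : ℂ) (σ + 1 / 2), Complex.exp (G w) = zetaNorm σ w) (i : ℕ) :
    HasSum (fun n : ℕ ↦ Λ n * Real.log n / (n : ℝ) ^ (1 + σ) * ((σ * Real.log n) ^ i / i.factorial))
      (scaledCoeff σ G i + (i + 1) / σ ^ 2 - (i + 1) * σ ^ i / (σ + 10) ^ (i + 2)) := by
  have habs : LSeries.abscissaOfAbsConv (LSeries.logMul^[i + 1] (fun n ↦ (Λ n : ℂ)))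
      < (1 + σ : ℂ).re := by
    rw [LSeries.absicssaOfAbsConv_logPowMul]
    refine abscissaOfAbsConv_vonMangoldt_le.trans_lt ?_
    simp only [Complex.add_re, Complex.one_re, Complex.ofReal_re]
    exact_mod_cast (by linarith : (1 : ℝ) < 1 + σ)
  have h1 := (LSeriesSummable_of_abscissaOfAbsConv_lt_re habs).LSeriesHasSum
  have h2 := (h1.mul_left ((i.factorial : ℂ)⁻¹ * σ ^ i)).mapL Complex.reCLM
  convert h2 using 1
  · ext n
    rcases eq_or_ne n 0 with rfl | hn
    · simp
    · have e : (n : ℂ) ^ (1 + σ : ℂ) = (((n : ℝ) ^ (1 + σ) : ℝ) : ℂ) := by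
        rw [Complex.ofReal_cpow n.cast_nonneg]
        simp
      simp only [Complex.reCLM_apply, LSeries.term_of_ne_zero hn, iterate_logMul_apply]
      rw [e, ← Complex.ofReal_natCast, ← Complex.ofReal_inv, ← Complex.ofReal_pow,
        ← Complex.ofReal_pow, ← Complex.ofReal_mul, ← Complex.ofReal_mul, ← Complex.ofReal_div,
        ← Complex.ofReal_mul, Complex.ofReal_re, mul_pow, pow_succ]
      ring
  · have e := iteratedDeriv_log_zetaNorm hσ hG hexp (i + 1)
    have e2 : LSeries (LSeries.logMul^[i + 1] (fun n ↦ (Λ n : ℂ))) (1 + σ)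
        = iteratedDeriv (i + 2) G 0 + (((i + 1).factorial / σ ^ (i + 2)
          - (i + 1).factorial / (σ + 10) ^ (i + 2) : ℝ) : ℂ) := by
      rw [e]; push_cast; ring
    have e3 : ((i.factorial : ℂ)⁻¹ * σ ^ i) = (((i.factorial : ℝ)⁻¹ * σ ^ i : ℝ) : ℂ) := by
      push_cast; rfl
    simp only [scaledCoeff, Complex.reCLM_apply]
    rw [e2, mul_add, Complex.add_re, e3, ← Complex.ofReal_mul, Complex.ofReal_re,
      Nat.factorial_succ]
    have : σ + 10 ≠ 0 := by linarith
    have : (i.factorial : ℝ) ≠ 0 := by positivity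
    push_cast
    field_simp
    ring

lemma abs_scaledCoeff_le (hσ : 0 < σ) {G : ℂ → ℂ} {Θ : ℝ}
    (hΘ : ∀ j, 1 ≤ j → ‖taylorCoeff G j‖ * (σ + 1 / 2) ^ j ≤ Θ) (i : ℕ) :
    |scaledCoeff σ G i| ≤ (i + 1) * (i + 2) / σ ^ 2 * Θ * (σ / (σ + 1 / 2)) ^ (i + 2) := by
  have h := hΘ (i + 2) (by omega)
  have e : ((i.factorial : ℂ)⁻¹ * σ ^ i * iteratedDeriv (i + 2) G 0)
      = ((i + 1) * (i + 2) * σ ^ i : ℝ) * taylorCoeff G (i + 2) := by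
    have h0 : (i.factorial : ℂ) ≠ 0 := by exact_mod_cast i.factorial_ne_zero
    have h1 : (i : ℂ) + 1 ≠ 0 := by exact_mod_cast i.succ_ne_zero
    have h2 : (i : ℂ) + 2 ≠ 0 := by exact_mod_cast (i + 1).succ_ne_zero
    rw [taylorCoeff, Nat.factorial_succ, Nat.factorial_succ]
    push_cast
    rw [add_assoc, one_add_one_eq_two]
    field_simp
  refine (Complex.abs_re_le_norm _).trans ?_
  rw [e, norm_mul, Complex.norm_real, Real.norm_of_nonneg (by positivity), div_pow]
  rw [← le_div_iff₀ (by positivity)] at h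
  calc _ ≤ (i + 1) * (i + 2) * σ ^ i * (Θ / (σ + 1 / 2) ^ (i + 2)) := by gcongr
    _ = _ := by field_simp; ring

lemma hasSum_scaledCoeff (hσ : 0 < σ) {G : ℂ → ℂ}
    (hG : DifferentiableOn ℂ G (Metric.ball 0 (σ + 1 / 2))) :
    HasSum (scaledCoeff σ G) (iteratedDeriv 2 G σ).re := by
  have hop : IsOpen (Metric.ball (0 : ℂ) (σ + 1 / 2)) := Metric.isOpen_ball
  have hd : DifferentiableOn ℂ (iteratedDeriv 2 G) (Metric.ball 0 (σ + 1 / 2)) := by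
    have := (hG.deriv hop).deriv hop
    rwa [iteratedDeriv_succ, iteratedDeriv_one]
  have hm : (σ : ℂ) ∈ Metric.ball (0 : ℂ) (σ + 1 / 2) := by
    rw [mem_ball_zero_iff, Complex.norm_real, Real.norm_of_nonneg hσ.le]
    linarith
  have h := (Complex.hasSum_taylorSeries_on_ball hd hm).mapL Complex.reCLM
  convert h using 1
  · ext i
    simp only [scaledCoeff, Complex.reCLM_apply, smul_eq_mul, sub_zero, mul_assoc]
    congr 3
    rw [iteratedDeriv_eq_iterate, iteratedDeriv_eq_iterate, iteratedDeriv_eq_iterate,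
      ← Function.iterate_add_apply]
  · rfl
end

lemma fractMellin_one_le_add {h : ℝ} (hh : 0 < h) :
    (fractMellin 1).re ≤ (fractMellin ((1 + h : ℝ) : ℂ)).re + h := by
  have e1 := fractMellin_ofReal 1
  have e2 := fractMellin_ofReal (1 + h)
  rw [Complex.ofReal_one] at e1
  rw [e1, e2, Complex.ofReal_re, Complex.ofReal_re]
  have hi : ∀ {a : ℝ}, 0 < a → IntegrableOn (fun t : ℝ ↦ t ^ (-(a + 1))) (Ioi 1) := fun {a} ha ↦
    integrableOn_Ioi_rpow_of_lt (by linarith) one_pos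
  have hv : ∀ {a : ℝ}, 0 < a → ∫ t in Ioi (1 : ℝ), t ^ (-(a + 1)) = 1 / a := fun {a} ha ↦ by
    rw [integral_Ioi_rpow_of_lt (by linarith) one_pos]
    simp
  have hm : ∀ {a : ℝ}, 0 < a → IntegrableOn (fun t : ℝ ↦ Int.fract t * t ^ (-(a + 1))) (Ioi 1) := by
    intro a ha
    refine (hi ha).mono' (by fun_prop) ?_
    refine (ae_restrict_iff' measurableSet_Ioi).2 (.of_forall fun t (ht : 1 < t) ↦ ?_)
    have : 0 < t := by linarith
    rw [Real.norm_of_nonneg (mul_nonneg (Int.fract_nonneg t) (by positivity))]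
    exact mul_le_of_le_one_left (by positivity) (Int.fract_lt_one t).le
  rw [← sub_le_iff_le_add', ← integral_sub (hm one_pos) (hm (by linarith))]
  calc _ ≤ ∫ t in Ioi (1 : ℝ), (t ^ (-((1 : ℝ) + 1)) - t ^ (-(1 + h + 1))) := by
        refine setIntegral_mono_on ((hm one_pos).sub (hm (by linarith)))
          ((hi one_pos).sub (hi (by linarith))) measurableSet_Ioi fun t (ht : 1 < t) ↦ ?_
        rw [← mul_sub]
        have : t ^ (-(1 + h + 1)) ≤ t ^ (-((1 : ℝ) + 1)) :=
          Real.rpow_le_rpow_of_exponent_le ht.le (by linarith)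
        exact mul_le_of_le_one_left (by linarith) (Int.fract_lt_one t).le
    _ = 1 / 1 - 1 / (1 + h) := by
        rw [integral_sub (hi one_pos) (hi (by linarith)), hv one_pos, hv (by linarith)]
    _ ≤ h := by
        rw [div_sub_div _ _ one_ne_zero (by linarith), div_le_iff₀ (by linarith)]
        nlinarith

lemma neg_one_le_re_deriv_fractMellin_one : -1 ≤ (deriv fractMellin 1).re := by
  have hd : HasDerivAt fractMellin (deriv fractMellin 1) ((1 : ℝ) : ℂ) := by
    rw [Complex.ofReal_one]
    exact (differentiableAt_fractMellin (by simp)).hasDerivAt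
  have h := hd.real_of_complex
  have ht := (hasDerivAt_iff_tendsto_slope.1 h).mono_left
    (nhdsWithin_mono (1 : ℝ) (show Ioi (1 : ℝ) ⊆ {1}ᶜ from fun t (ht : 1 < t) ↦ ht.ne'))
  refine ge_of_tendsto ht ?_
  filter_upwards [self_mem_nhdsWithin] with t (ht : 1 < t)
  have := fractMellin_one_le_add (h := t - 1) (by linarith)
  rw [add_sub_cancel] at this
  rw [slope_def_field, le_div_iff₀ (by linarith), Complex.ofReal_one]
  linarith

section
variable {σ : ℝ}

lemma re_iteratedDeriv_two_log_zetaNorm_le {G : ℂ → ℂ} (hσ : 0 < σ)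
    (hG : DifferentiableOn ℂ G (Metric.ball 0 (σ + 1 / 2)))
    (hexp : ∀ w ∈ Metric.ball (0 : ℂ) (σ + 1 / 2), Complex.exp (G w) = zetaNorm σ w) :
    (iteratedDeriv 2 G σ).re ≤ 1 + 1 / 100 := by
  have hσm : (σ : ℂ) ∈ Metric.ball (0 : ℂ) (σ + 1 / 2) := by
    rw [mem_ball_zero_iff, Complex.norm_real, Real.norm_of_nonneg hσ.le]
    linarith
  have hf : ∀ {s : ℂ}, 0 < s.re → HasDerivAt fractMellin (deriv fractMellin s) s := fun hs ↦
    (differentiableAt_fractMellin hs).hasDerivAt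
  have hop : IsOpen {s : ℂ | 0 < s.re} := isOpen_lt continuous_const Complex.continuous_re
  have hf2 : DifferentiableAt ℂ (deriv fractMellin) (1 + σ - σ) := by
    have h : DifferentiableOn ℂ fractMellin {s : ℂ | 0 < s.re} := fun s hs ↦
      (hf hs).differentiableAt.differentiableWithinAt
    exact (h.deriv hop).differentiableAt (hop.mem_nhds (by simp))
  have hA : ∀ {w : ℂ}, w.re < σ + 1 / 2 → HasDerivAt (fun w : ℂ ↦ fractMellin (1 + σ - w))
      (-deriv fractMellin (1 + σ - w)) w := fun {w} hw ↦
    HasDerivAt.comp_const_sub (1 + σ : ℂ) w (hf (by simp; linarith))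
  have hA2 : HasDerivAt (fun w : ℂ ↦ deriv fractMellin (1 + σ - w))
      (-deriv (deriv fractMellin) (1 + σ - σ)) σ :=
    HasDerivAt.comp_const_sub (1 + σ : ℂ) (σ : ℂ) hf2.hasDerivAt
  have hlin : ∀ (c w : ℂ), HasDerivAt (fun w : ℂ ↦ c - w) (-1) w := fun c w ↦ by
    simpa using (hasDerivAt_id w).const_sub c
  set B : ℂ → ℂ := fun w ↦ 1 - (σ - w) * fractMellin (1 + σ - w) with hB
  set B' : ℂ → ℂ := fun w ↦ fractMellin (1 + σ - w) + (σ - w) * deriv fractMellin (1 + σ - w)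
    with hB'
  have hBd : ∀ {w : ℂ}, w.re < σ + 1 / 2 → HasDerivAt B (B' w) w := fun {w} hw ↦ by
    refine (((hlin σ w).mul (hA hw)).const_sub 1).congr_deriv ?_
    simp only [hB']; ring
  have hBσ : B σ = 1 := by simp [hB]
  have hBc : ContinuousAt B σ := (hBd (by simp)).continuousAt
  have hdG : deriv G =ᶠ[𝓝 (σ : ℂ)] fun w ↦ B' w / B w - (1 + σ - w)⁻¹ + (σ + 10 - w)⁻¹ := by
    filter_upwards [Metric.isOpen_ball.mem_nhds hσm, hBc.eventually_ne (y := 0) (by simp [hBσ])]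
      with w hw hBw
    have hre := re_lt_of_mem_ball hw
    have hne := add_ten_ne_zero hre
    have hne1 : (1 + σ - w : ℂ) ≠ 0 := by
      intro h
      have := congrArg Complex.re h
      simp at this; linarith
    have hd := ((hlin (1 + σ) w).mul (hBd hre)).div ((hlin σ w).add_const 10) hne
    have e : zetaNorm σ = fun w ↦ (1 + σ - w) * B w / (σ - w + 10) := by
      ext w
      simp only [zetaNorm, zetaReg, hB]
      ring
    have h := deriv_eq_logDeriv_of_exp_eq Metric.isOpen_ball hG hexp hw
      (F' := _) (by rw [e]; exact hd)
    rw [h, e]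
    have e : (σ : ℂ) + 10 - w = σ - w + 10 := by ring
    rw [e]
    simp only [Pi.mul_apply]
    field_simp
    ring
  have hB'd : HasDerivAt B' (-2 * deriv fractMellin 1) σ := by
    refine ((hA (by simp)).add ((hlin σ σ).mul hA2)).congr_deriv ?_
    simp; ring
  have hd := ((hB'd.div (hBd (w := σ) (by simp)) (by simp [hBσ])).sub
    ((hlin (1 + σ) σ).inv (by simp))).add ((hlin (σ + 10) σ).inv (by simp))
  rw [iteratedDeriv_succ, iteratedDeriv_one, hdG.deriv_eq]
  have e := hd.deriv
  have e1 := fractMellin_ofReal 1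
  rw [Complex.ofReal_one] at e1
  set c := (∫ t in Ioi (1:ℝ), Int.fract t * t^(-((1 : ℝ)+1)))
  have key : deriv (fun w ↦ B' w / B w - (1 + σ - w)⁻¹ + (σ + 10 - w)⁻¹) (σ : ℂ)
      = -2 * deriv fractMellin 1 + ((-c ^ 2 - 1 + 1 / 100 : ℝ) : ℂ) := by
    refine e.trans ?_
    simp [hBσ, hB', e1]
    ring
  rw [key, Complex.add_re, Complex.ofReal_re]
  have := neg_one_le_re_deriv_fractMellin_one
  have e2 : (-2 * deriv fractMellin 1).re = -2 * (deriv fractMellin 1).re := by simp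
  rw [e2]
  nlinarith [sq_nonneg c]
end

lemma exists_coeff_vonMangoldt (hRH : RiemannHypothesis) {σ : ℝ} (hσ : 1000 ≤ σ) :
    ∃ (P : ℕ → ℝ) (K : ℝ), HasSum P K ∧ K ≤ 1 + 1 / 100 ∧
      (∀ i, HasSum (fun n : ℕ ↦ Λ n * Real.log n / (n : ℝ) ^ (1 + σ) *
        ((σ * Real.log n) ^ i / i.factorial))
        (P i + (i + 1) / σ ^ 2 - (i + 1) * σ ^ i / (σ + 10) ^ (i + 2))) ∧
      ∀ i, |P i| ≤ (i + 1) * (i + 2) / σ ^ 2 * (4 * meanBound σ + 20 / σ) *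
        (σ / (σ + 1 / 2)) ^ (i + 2) := by
  obtain ⟨G, hG, hexp, hΘ⟩ := exists_log_zetaNorm hRH hσ
  have h0 : 0 < σ := by linarith
  exact ⟨scaledCoeff σ G, _, hasSum_scaledCoeff h0 hG,
    re_iteratedDeriv_two_log_zetaNorm_le h0 hG hexp, hasSum_vonMangoldt_mul_pow h0 hG hexp,
    abs_scaledCoeff_le h0 hΘ⟩

/-- Weights that turn the partial exponential sum into a majorant of the exponential. -/
noncomputable def majorantWeight (q : ℝ) (k i : ℕ) : ℝ :=
  1 + q ^ k / q ^ i - 2 * (q ^ k / q ^ i) ^ 2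

section
variable {q : ℝ} {k : ℕ}

lemma exp_le_sum_majorantWeight {μ : ℝ} (hq : 0 < q) (hq1 : q ≤ 1) (hμ : 0 ≤ μ)
    (h : 2 * q ^ k * Real.exp (μ / q ^ 2) ≤ Real.exp (μ / q)) :
    Real.exp μ ≤ ∑ i ∈ Finset.range (k + 1), majorantWeight q k i * (μ ^ i / i.factorial) := by
  have hs : ∀ c : ℝ, HasSum (fun i : ℕ ↦ c ^ i / i.factorial) (Real.exp c) := fun c ↦ by
    rw [Real.exp_eq_exp_ℝ]
    exact NormedSpace.expSeries_div_hasSum_exp c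
  have h1 : HasSum (fun i ↦ majorantWeight q k i * (μ ^ i / i.factorial))
      (Real.exp μ + q ^ k * Real.exp (μ / q) - 2 * q ^ (2 * k) * Real.exp (μ / q ^ 2)) := by
    have e : (fun i ↦ majorantWeight q k i * (μ ^ i / i.factorial))
        = fun i : ℕ ↦ μ ^ i / i.factorial + q ^ k * ((μ / q) ^ i / i.factorial)
          - 2 * q ^ (2 * k) * ((μ / q ^ 2) ^ i / i.factorial) := by
      funext i
      rw [majorantWeight, div_pow μ, div_pow μ, div_pow (q ^ k), ← pow_mul, ← pow_mul, ← pow_mul,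
        mul_comm i 2, mul_comm k 2]
      field_simp
    rw [e]
    exact ((hs μ).add ((hs (μ / q)).mul_left (q ^ k))).sub
      ((hs (μ / q ^ 2)).mul_left (2 * q ^ (2 * k)))
  have h2 := sum_le_hasSum (Finset.range (k + 1)) (fun i hi ↦ ?_) h1.neg
  · rw [Finset.sum_neg_distrib] at h2
    have h3 : 0 ≤ q ^ k * (Real.exp (μ / q) - 2 * q ^ k * Real.exp (μ / q ^ 2)) :=
      mul_nonneg (by positivity) (by linarith)
    have e : q ^ (2 * k) = q ^ k * q ^ k := by ring
    rw [e] at h2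
    linarith
  · rw [Finset.mem_range, not_lt] at hi
    have hr : 1 ≤ q ^ k / q ^ i := by
      rw [one_le_div (by positivity)]
      exact pow_le_pow_of_le_one hq.le hq1 (by omega)
    rw [majorantWeight, ← neg_mul]
    exact mul_nonneg (by nlinarith) (by positivity)

lemma majorantWeight_mem (hq : 0 < q) (hq1 : q ≤ 1) {i : ℕ} (hi : i ≤ k) :
    0 ≤ majorantWeight q k i ∧ |majorantWeight q k i - 1| ≤ q ^ (k - i) := by
  have e : q ^ k / q ^ i = q ^ (k - i) := by
    rw [div_eq_iff (by positivity), ← pow_add, Nat.sub_add_cancel hi]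
  rw [majorantWeight, e]
  have h0 : 0 < q ^ (k - i) := by positivity
  have h1 : q ^ (k - i) ≤ 1 := pow_le_one₀ hq.le hq1
  refine ⟨by nlinarith, abs_le.2 ⟨by nlinarith, by nlinarith⟩⟩

lemma sum_geometric_sub_le (hq : 0 < q) (hq1 : q < 1) (N : ℕ) :
    ∑ m ∈ Finset.range N, (q ^ m - 2 * (q ^ m) ^ 2) ≤ 0 := by
  have h : ∀ N : ℕ, (1 - q) * (1 + q) * ∑ m ∈ Finset.range N, (q ^ m - 2 * (q ^ m) ^ 2)
      = (1 - q ^ N) * (q - 1 - 2 * q ^ N) := by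
    intro N
    induction N with
    | zero => simp
    | succ N ih => rw [Finset.sum_range_succ, mul_add, ih]; ring
  have h0 : 0 < q ^ N := by positivity
  have h1 : q ^ N ≤ 1 := pow_le_one₀ hq.le hq1.le
  have h2 : 0 < (1 - q) * (1 + q) := mul_pos (by linarith) (by linarith)
  by_contra! hc
  have := mul_pos h2 hc
  rw [h] at this
  nlinarith

lemma sum_succ_mul_rev_nonpos {c : ℕ → ℝ} (hc : ∀ N, ∑ m ∈ Finset.range N, c m ≤ 0) (k : ℕ) :
    ∑ i ∈ Finset.range (k + 1), ((i : ℝ) + 1) * c (k - i) ≤ 0 := by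
  induction k with
  | zero => simpa using hc 1
  | succ k ih =>
    rw [Finset.sum_range_succ']
    have e : ∑ i ∈ Finset.range (k + 1), (((i + 1 : ℕ) : ℝ) + 1) * c (k + 1 - (i + 1))
        = ∑ i ∈ Finset.range (k + 1), ((i : ℝ) + 1) * c (k - i)
          + ∑ m ∈ Finset.range (k + 1), c m := by
      rw [← Finset.sum_range_reflect c, ← Finset.sum_add_distrib]
      refine Finset.sum_congr rfl fun i _ ↦ ?_
      have : k + 1 - 1 - i = k - i := by omega
      rw [this, Nat.add_sub_add_right]
      push_cast; ring
    rw [e]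
    have h := hc (k + 2)
    rw [Finset.sum_range_succ] at h
    simp only [Nat.cast_zero, zero_add, one_mul, Nat.sub_zero]
    linarith

lemma sum_majorantWeight_mul_le (hq : 0 < q) (hq1 : q < 1) (k : ℕ) :
    ∑ i ∈ Finset.range (k + 1), majorantWeight q k i * ((i : ℝ) + 1) ≤ (k + 1) * (k + 2) / 2 := by
  have h := sum_succ_mul_rev_nonpos (fun N ↦ sum_geometric_sub_le hq hq1 N) k
  have e : ∑ i ∈ Finset.range (k + 1), ((i : ℝ) + 1) = (k + 1) * (k + 2) / 2 := by
    clear h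
    induction k with
    | zero => norm_num
    | succ k ih => rw [Finset.sum_range_succ, ih]; push_cast; ring
  rw [← e]
  have e2 : ∑ i ∈ Finset.range (k + 1), majorantWeight q k i * ((i : ℝ) + 1)
      = ∑ i ∈ Finset.range (k + 1), ((i : ℝ) + 1)
        + ∑ i ∈ Finset.range (k + 1), ((i : ℝ) + 1) * (q ^ (k - i) - 2 * (q ^ (k - i)) ^ 2) := by
    rw [← Finset.sum_add_distrib]
    refine Finset.sum_congr rfl fun i hi ↦ ?_
    have e : q ^ k / q ^ i = q ^ (k - i) := by
      rw [div_eq_iff (by positivity), ← pow_add,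
        Nat.sub_add_cancel (by rw [Finset.mem_range] at hi; omega)]
    rw [majorantWeight, e]; ring
  linarith
end

section
variable {P : ℕ → ℝ} {C t : ℝ}

lemma neg_tsum_tail_le (hC : 0 ≤ C) (ht : 0 < t) {K : ℝ} (hP : HasSum P K)
    (hb : ∀ i : ℕ, |P i| ≤ (i + 1) * (i + 2) * C * t ^ (i + 2)) (k : ℕ)
    (h1 : t * (1 + 1 / (k + 3 : ℝ)) ^ 2 < 1) :
    ∑ i ∈ Finset.range (k + 1), P i ≤
      K + (k + 3) ^ 2 * C * t ^ (k + 3) / (1 - t * (1 + 1 / (k + 3 : ℝ)) ^ 2) := by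
  set N : ℝ := k + 3 with hN
  have hN0 : 0 < N := by positivity
  set r := t * (1 + 1 / N) ^ 2
  have hr0 : 0 ≤ r := by positivity
  have hg := (hasSum_geometric_of_lt_one hr0 h1).mul_left (N ^ 2 * C * t ^ (k + 3))
  have h2 := (hasSum_nat_add_iff' (k + 1)).2 hP
  have h3 := hasSum_le (fun j ↦ ?_) h2.neg hg
  · rw [div_eq_mul_inv]
    linarith
  refine (neg_le_abs _).trans ((hb _).trans ?_)
  have hB : 1 + (j : ℝ) / N ≤ (1 + 1 / N) ^ j := by
    have := one_add_mul_le_pow (a := 1 / N) (by have : 0 < 1 / N := by positivity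
                                                linarith) j
    rwa [mul_one_div] at this
  have e : N + j = N * (1 + j / N) := by field_simp
  push_cast
  calc ((j : ℝ) + (k + 1) + 1) * (j + (k + 1) + 2) * C * t ^ (j + (k + 1) + 2)
      ≤ (N + j) * (N + j) * C * t ^ (j + (k + 1) + 2) := by
        have h1 : (j : ℝ) + (k + 1) + 1 ≤ N + j := by linarith
        have h2 : (j : ℝ) + (k + 1) + 2 ≤ N + j := by linarith
        have e2 : j + (k + 1) + 2 = k + 3 + j := by omega
        gcongr
    _ = (N ^ 2 * C * t ^ (k + 3)) * (t ^ j * (1 + j / N) ^ 2) := by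
        rw [e]; ring
    _ ≤ (N ^ 2 * C * t ^ (k + 3)) * (t ^ j * ((1 + 1 / N) ^ j) ^ 2) := by gcongr
    _ = _ := by rw [mul_pow t, ← pow_mul, ← pow_mul, mul_comm j 2]

lemma sum_geometric_mul_abs_le {q : ℝ} (hC : 0 ≤ C) (hq : 0 < q) (hqt : q < t)
    (hb : ∀ i : ℕ, |P i| ≤ (i + 1) * (i + 2) * C * t ^ (i + 2)) (k : ℕ) :
    ∑ i ∈ Finset.range (k + 1), q ^ (k - i) * |P i| ≤
      (k + 2) ^ 2 * C * t ^ (k + 2) / (1 - q / t) := by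
  have ht : 0 < t := hq.trans hqt
  have h1 : q / t < 1 := (div_lt_one ht).2 hqt
  calc ∑ i ∈ Finset.range (k + 1), q ^ (k - i) * |P i|
      ≤ ∑ i ∈ Finset.range (k + 1), (k + 2) ^ 2 * C * t ^ (k + 2) * (q / t) ^ (k - i) := by
        refine Finset.sum_le_sum fun i hi ↦ ?_
        have hik : i ≤ k := by rw [Finset.mem_range] at hi; omega
        have hik' : (i : ℝ) ≤ k := by exact_mod_cast hik
        calc q ^ (k - i) * |P i| ≤ q ^ (k - i) * ((i + 1) * (i + 2) * C * t ^ (i + 2)) := by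
              gcongr; exact hb i
          _ ≤ q ^ (k - i) * ((k + 2) * (k + 2) * C * t ^ (i + 2)) := by
              gcongr; linarith
          _ = _ := by
              have e : t ^ (k + 2) = t ^ (i + 2) * t ^ (k - i) := by
                rw [← pow_add]; congr 1; omega
              rw [e, div_pow]
              field_simp
    _ = (k + 2) ^ 2 * C * t ^ (k + 2) * ∑ m ∈ Finset.range (k + 1), (q / t) ^ m := by
        rw [← Finset.mul_sum]
        congr 1
        rw [← Finset.sum_range_reflect]
        refine Finset.sum_congr rfl fun i hi ↦ ?_
        rw [Finset.mem_range] at hi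
        congr 1
        omega
    _ ≤ _ := by
        rw [div_eq_mul_inv _ (1 - q / t)]
        refine mul_le_mul_of_nonneg_left ?_ (by positivity)
        rw [← tsum_geometric_of_lt_one (by positivity) h1]
        exact (summable_geometric_of_lt_one (by positivity) h1).sum_le_tsum _
          (fun _ _ ↦ by positivity)
end

lemma sum_vonMangoldt_sq_div_le_sub {N : ℕ} (hN : 64 ≤ N) :
    ∑ n ∈ Finset.Iic N, Λ n ^ 2 / (n : ℝ) ≤
      ∑ n ∈ Finset.Iic N, Λ n * Real.log n / n - 57 / 64 * Real.log 2 ^ 2 := by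
  have hpow : ∀ j : ℕ, j ≠ 0 → Λ (2 ^ j) = Real.log 2 := fun j hj ↦ by
    rw [vonMangoldt_apply_pow hj, vonMangoldt_apply_prime Nat.prime_two, Nat.cast_ofNat]
  have hlog : ∀ j : ℕ, Real.log ((2 ^ j : ℕ) : ℝ) = j * Real.log 2 := fun j ↦ by
    push_cast
    rw [Real.log_pow]
  have h0 : ∀ n : ℕ, 0 ≤ (Λ n * Real.log n - Λ n ^ 2) / n := fun n ↦ by
    have h1 := vonMangoldt_le_log (n := n)
    have h2 := vonMangoldt_nonneg (n := n)
    exact div_nonneg (by nlinarith) n.cast_nonneg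
  have hsub : (Finset.Icc 2 6).image (fun j ↦ 2 ^ j) ⊆ Finset.Iic N := by
    intro n hn
    obtain ⟨j, hj, rfl⟩ := Finset.mem_image.1 hn
    rw [Finset.mem_Icc] at hj
    rw [Finset.mem_Iic]
    calc 2 ^ j ≤ 2 ^ 6 := Nat.pow_le_pow_right two_pos hj.2
      _ ≤ N := by simpa using hN
  have h := Finset.sum_le_sum_of_subset_of_nonneg hsub (fun n _ _ ↦ h0 n)
  rw [Finset.sum_image (fun a _ b _ h ↦ Nat.pow_right_injective le_rfl h)] at h
  have e : ∑ j ∈ Finset.Icc (2 : ℕ) 6, (Λ (2 ^ j) * Real.log ((2 ^ j : ℕ) : ℝ) - Λ (2 ^ j) ^ 2)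
      / ((2 ^ j : ℕ) : ℝ) = 57 / 64 * Real.log 2 ^ 2 := by
    have e2 : ∀ j ∈ Finset.Icc (2 : ℕ) 6, (Λ (2 ^ j) * Real.log ((2 ^ j : ℕ) : ℝ) - Λ (2 ^ j) ^ 2)
      / ((2 ^ j : ℕ) : ℝ) = ((j : ℝ) - 1) / 2 ^ j * Real.log 2 ^ 2 := fun j hj ↦ by
      rw [hpow j (by rw [Finset.mem_Icc] at hj; omega), hlog]
      push_cast
      ring
    rw [Finset.sum_congr rfl e2, ← Finset.sum_mul]
    congr 1
    rw [Finset.sum_Icc_succ_top (by norm_num), Finset.sum_Icc_succ_top (by norm_num),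
      Finset.sum_Icc_succ_top (by norm_num), Finset.sum_Icc_succ_top (by norm_num), Finset.Icc_self,
      Finset.sum_singleton]
    norm_num
  rw [e] at h
  have e3 : ∑ n ∈ Finset.Iic N, (Λ n * Real.log n - Λ n ^ 2) / (n : ℝ)
      = ∑ n ∈ Finset.Iic N, Λ n * Real.log n / n - ∑ n ∈ Finset.Iic N, Λ n ^ 2 / (n : ℝ) := by
    rw [← Finset.sum_sub_distrib]
    exact Finset.sum_congr rfl fun n _ ↦ sub_div _ _ _
  linarith

/-- Comparison of the truncated sum with the Taylor coefficients, through the exponential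
majorant. -/
lemma sum_vonMangoldt_mul_log_div_le {σ x q Θ K : ℝ} {k : ℕ} {P : ℕ → ℝ} (hx : 1 ≤ x)
    (hσ : 0 < σ) (hq : 0 < q) (hq1 : q < 1) (hqt : q < σ / (σ + 1 / 2)) (hΘ : 0 ≤ Θ)
    (hmaj : ∀ μ, 0 ≤ μ → μ ≤ σ * Real.log x →
      2 * q ^ k * Real.exp (μ / q ^ 2) ≤ Real.exp (μ / q))
    (hP : HasSum P K)
    (hα : ∀ i, HasSum (fun n : ℕ ↦ Λ n * Real.log n / (n : ℝ) ^ (1 + σ) *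
      ((σ * Real.log n) ^ i / i.factorial))
      (P i + (i + 1) / σ ^ 2 - (i + 1) * σ ^ i / (σ + 10) ^ (i + 2)))
    (hb : ∀ i, |P i| ≤ (i + 1) * (i + 2) / σ ^ 2 * Θ * (σ / (σ + 1 / 2)) ^ (i + 2))
    (h1 : σ / (σ + 1 / 2) * (1 + 1 / (k + 3 : ℝ)) ^ 2 < 1) :
    ∑ n ∈ Finset.Iic ⌊x⌋₊, Λ n * Real.log n / n ≤
      (k + 1) * (k + 2) / (2 * σ ^ 2) + K
      + (k + 3) ^ 2 * (Θ / σ ^ 2) * (σ / (σ + 1 / 2)) ^ (k + 3)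
        / (1 - σ / (σ + 1 / 2) * (1 + 1 / (k + 3 : ℝ)) ^ 2)
      + (k + 2) ^ 2 * (Θ / σ ^ 2) * (σ / (σ + 1 / 2)) ^ (k + 2) / (1 - q / (σ / (σ + 1 / 2))) := by
  have hb' : ∀ i : ℕ, |P i| ≤ (i + 1) * (i + 2) * (Θ / σ ^ 2) * (σ / (σ + 1 / 2)) ^ (i + 2) :=
    fun i ↦ (hb i).trans_eq (by ring)
  have ht : 0 < σ / (σ + 1 / 2) := by positivity
  have hB := neg_tsum_tail_le (by positivity) ht hP hb' k h1
  have hA := sum_geometric_mul_abs_le (by positivity) hq hqt hb' k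
  have hM := sum_majorantWeight_mul_le hq hq1 k
  have h0 : ∀ n : ℕ, 0 ≤ Real.log n := fun n ↦ Real.log_natCast_nonneg n
  have hterm : ∀ n ∈ Finset.Iic ⌊x⌋₊, Λ n * Real.log n / n ≤
      ∑ i ∈ Finset.range (k + 1), majorantWeight q k i * (Λ n * Real.log n / (n : ℝ) ^ (1 + σ) *
        ((σ * Real.log n) ^ i / i.factorial)) := by
    intro n hn
    rcases eq_or_ne n 0 with rfl | hn0
    · simp
    have hn1 : (0 : ℝ) < n := by positivity
    have hnx : (n : ℝ) ≤ x := (Nat.le_floor_iff (by linarith)).1 (Finset.mem_Iic.1 hn)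
    have h := exp_le_sum_majorantWeight hq hq1.le (mul_nonneg hσ.le (h0 n))
      (hmaj _ (mul_nonneg hσ.le (h0 n)) (by gcongr))
    have e : (n : ℝ) ^ (1 + σ) = n * Real.exp (σ * Real.log n) := by
      rw [Real.rpow_add hn1, Real.rpow_one, Real.rpow_def_of_pos hn1, mul_comm σ]
    have hE := Real.exp_pos (σ * Real.log n)
    have hc : 0 ≤ Λ n * Real.log n / (n : ℝ) ^ (1 + σ) :=
      div_nonneg (mul_nonneg vonMangoldt_nonneg (h0 n)) (by positivity)
    calc Λ n * Real.log n / n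
        = Λ n * Real.log n / (n : ℝ) ^ (1 + σ) * Real.exp (σ * Real.log n) := by
          rw [e]; field_simp
      _ ≤ _ := mul_le_mul_of_nonneg_left h hc
      _ = _ := by
          rw [Finset.mul_sum]
          exact Finset.sum_congr rfl fun i _ ↦ by ring
  have hαle : ∀ i ∈ Finset.range (k + 1), ∑ n ∈ Finset.Iic ⌊x⌋₊, majorantWeight q k i *
      (Λ n * Real.log n / (n : ℝ) ^ (1 + σ) * ((σ * Real.log n) ^ i / i.factorial)) ≤
      majorantWeight q k i * (i + 1) / σ ^ 2 + P i + q ^ (k - i) * |P i| := by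
    intro i hi
    obtain ⟨hw, hw1⟩ := majorantWeight_mem (k := k) hq hq1.le
      (by rw [Finset.mem_range] at hi; omega : i ≤ k)
    have h2 := sum_le_hasSum (Finset.Iic ⌊x⌋₊) (fun n _ ↦ mul_nonneg (div_nonneg
      (mul_nonneg vonMangoldt_nonneg (h0 n)) (by positivity))
      (div_nonneg (pow_nonneg (mul_nonneg hσ.le (h0 n)) _) (by positivity))) (hα i)
    have h3 : (0 : ℝ) ≤ (i + 1) * σ ^ i / (σ + 10) ^ (i + 2) := by positivity
    rw [← Finset.mul_sum]
    have h4 : (majorantWeight q k i - 1) * P i ≤ q ^ (k - i) * |P i| :=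
      (le_abs_self _).trans (by rw [abs_mul]; gcongr)
    calc _ ≤ majorantWeight q k i * (P i + (i + 1) / σ ^ 2) := by gcongr; linarith
      _ = majorantWeight q k i * (i + 1) / σ ^ 2 + P i + (majorantWeight q k i - 1) * P i := by ring
      _ ≤ _ := by linarith
  calc _ ≤ _ := Finset.sum_le_sum hterm
    _ ≤ ∑ i ∈ Finset.range (k + 1),
        (majorantWeight q k i * (i + 1) / σ ^ 2 + P i + q ^ (k - i) * |P i|) := by
        rw [Finset.sum_comm]
        exact Finset.sum_le_sum hαle
    _ = (∑ i ∈ Finset.range (k + 1), majorantWeight q k i * ((i : ℝ) + 1)) / σ ^ 2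
        + ∑ i ∈ Finset.range (k + 1), P i + ∑ i ∈ Finset.range (k + 1), q ^ (k - i) * |P i| := by
        rw [Finset.sum_add_distrib, Finset.sum_add_distrib, Finset.sum_div]
    _ ≤ _ := by
        have h5 := div_le_div_of_nonneg_right hM (sq_nonneg σ)
        rw [div_div] at h5
        linarith

lemma thirteen_mul_log_ten_mem :
    29.929 ≤ 13 * Real.log 10 ∧ 13 * Real.log 10 ≤ 29.935 := by
  rw [Real.log_ten_eq]
  have h1 := Real.log_two_gt_d9
  have h2 := Real.log_two_lt_d9
  have h3 := Real.log_five_gt_d9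
  have h4 := Real.log_five_lt_d9
  norm_num1 at *
  constructor <;> linarith

lemma exp_neg_half_thirteen_mul_log_ten_le :
    Real.exp (-(13 * Real.log 10) / 2) ≤ 0.00000031623 := by
  refine le_of_sq_le_sq ?_ (by norm_num)
  rw [← Real.exp_nat_mul]
  have e : ((2 : ℕ) : ℝ) * (-(13 * Real.log 10) / 2) = -((13 : ℕ) * Real.log 10) := by
    push_cast; ring
  rw [e, Real.exp_neg, ← Real.log_pow, Real.exp_log (by norm_num)]
  norm_num

lemma log_165_le : Real.log 165 ≤ 5.12 := by
  rw [Real.log_le_iff_le_exp (by norm_num)]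
  have h1 := Real.exp_one_gt_d9
  have h2 : Real.exp 5.12 = Real.exp 1 ^ 5 * Real.exp 0.12 := by
    rw [← Real.exp_nat_mul, ← Real.exp_add]; norm_num
  have h3 := Real.quadratic_le_exp_of_nonneg (x := 0.12) (by norm_num)
  rw [h2]
  calc (165 : ℝ) ≤ 2.7182818283 ^ 5 * (1 + 0.12 + 0.12 ^ 2 / 2) := by norm_num
    _ ≤ _ := by gcongr

lemma coeffBound_le {L y : ℝ} (hy : 1 ≤ y) (hL : 29.929 * y ≤ L) (hL' : L ≤ 29.935 * y) :
    4 * meanBound (L ^ 3) + 20 / L ^ 3 ≤ 0.0887 * y := by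
  have hL0 : 29.929 ≤ L := by linarith
  have hσ : (26797.69 : ℝ) ≤ L ^ 3 := by
    calc (26797.69 : ℝ) ≤ 29.929 ^ 3 := by norm_num
      _ ≤ _ := by gcongr
  have hs : 163.7 ≤ √(L ^ 3) := Real.le_sqrt_of_sq_le (by norm_num1 at hσ ⊢; exact hσ)
  have hs1 : √(1 + L ^ 3) ≤ 164 * y ^ 2 := by
    refine Real.sqrt_le_iff.2 ⟨by positivity, ?_⟩
    have h1 : L ^ 3 ≤ 26826 * y ^ 3 := by
      calc L ^ 3 ≤ (29.935 * y) ^ 3 := by gcongr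
        _ = 29.935 ^ 3 * y ^ 3 := by ring
        _ ≤ _ := by gcongr; norm_num
    have h2 : y ^ 3 ≤ y ^ 4 := pow_le_pow_right₀ hy (by norm_num)
    have h3 : 1 ≤ y ^ 4 := one_le_pow₀ hy
    nlinarith
  have hM : Real.log (1 + √(1 + L ^ 3)) + 1 ≤ 6.12 * y := by
    have h1 : 1 + √(1 + L ^ 3) ≤ 165 * y ^ 2 := by
      have : 1 ≤ y ^ 2 := one_le_pow₀ hy
      linarith
    have h2 := Real.log_le_log (by positivity) h1
    rw [Real.log_mul (by norm_num) (by positivity), Real.log_pow] at h2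
    have h3 := Real.log_le_sub_one_of_pos (x := y) (by linarith)
    have h4 := log_165_le
    push_cast at h2
    linarith
  have hy0 : 0 < y := by linarith
  have hm : meanBound (L ^ 3) ≤ (11 / 6 * (6.12 * y) / 163.7 + 11 * y / 26797.69) / 3.14 := by
    rw [meanBound]
    have h5 : 0 ≤ Real.log (1 + √(1 + L ^ 3)) + 1 :=
      add_nonneg (Real.log_nonneg (by simp)) zero_le_one
    have h6 := Real.pi_gt_d2
    gcongr
    linarith
  have h7 : 20 / L ^ 3 ≤ 20 * y / 26797.69 := by
    gcongr
    linarith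
  norm_num1 at hm h7 ⊢
  linarith

lemma pow_mul_exp_neg_half_le {ℓ y : ℝ} (hℓ : 29.929 ≤ ℓ) (hy : 1 ≤ y) :
    y ^ 6 * Real.exp (-(ℓ * y) / 2) ≤ Real.exp (-ℓ / 2) := by
  have h1 : y ≤ Real.exp (y - 1) := by linarith [Real.add_one_le_exp (y - 1)]
  calc y ^ 6 * Real.exp (-(ℓ * y) / 2)
      ≤ Real.exp (y - 1) ^ 6 * Real.exp (-(ℓ * y) / 2) := by gcongr
    _ = Real.exp ((6 : ℕ) * (y - 1) + -(ℓ * y) / 2) := by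
        rw [Real.exp_add, Real.exp_nat_mul]
    _ ≤ _ := by
        refine Real.exp_le_exp.2 ?_
        push_cast
        nlinarith

lemma majorant_condition {L q : ℝ} {k : ℕ} (hL : 29 ≤ L) (hq : q = (1 + 7 / (10 * L ^ 2))⁻¹)
    (hk : L ^ 4 + 2.05 * L ^ 2 ≤ k) {μ : ℝ} (hμ : μ ≤ L ^ 3 * L) :
    2 * q ^ k * Real.exp (μ / q ^ 2) ≤ Real.exp (μ / q) := by
  have hL2 : (29 : ℝ) ^ 2 ≤ L ^ 2 := by gcongr
  set Z := L ^ 2 with hZ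
  have hZ0 : 0 < Z := by linarith
  set η := 7 / (10 * Z) with hη
  have hη0 : 0 < η := by positivity
  have hηZ : η * Z = 0.7 := by rw [hη]; field_simp; norm_num
  have e1 : μ / q ^ 2 = μ / q + μ * (η * (1 + η)) := by
    rw [hq]; field_simp
  have hlog : η - η ^ 2 / 2 ≤ Real.log (1 + η) := by
    refine le_trans ?_ (Real.le_log_one_add_of_nonneg hη0.le)
    rw [le_div_iff₀ (by linarith)]
    nlinarith [pow_pos hη0 3]
  have hsmall : η ≤ 0.001 := by
    rw [hη, div_le_iff₀ (by positivity)]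
    linarith
  have hkey : Real.log 2 + μ * (η * (1 + η)) ≤ k * Real.log (1 + η) := by
    have h2 := Real.log_two_lt_d9
    have h3 : μ * (η * (1 + η)) ≤ Z * Z * (η * (1 + η)) := by
      have : μ ≤ Z * Z := hμ.trans_eq (by rw [hZ]; ring)
      gcongr
    have h4 : Z * Z * (η * (1 + η)) = 0.7 * Z + 0.49 := by
      calc _ = (η * Z) * Z + (η * Z) ^ 2 := by ring
        _ = _ := by rw [hηZ]; norm_num
    have h5 : (Z * Z + 2.05 * Z) * (η - η ^ 2 / 2) = 0.7 * Z + 1.435 - 0.245 - 0.7175 * η := by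
      calc _ = (η * Z) * Z + 2.05 * (η * Z) - (η * Z) ^ 2 / 2 - 1.025 * (η * Z) * η := by ring
        _ = _ := by rw [hηZ]; ring
    have h6 : (Z * Z + 2.05 * Z) * (η - η ^ 2 / 2) ≤ k * Real.log (1 + η) := by
      have : Z * Z + 2.05 * Z ≤ k := le_trans (by rw [hZ]; ring_nf; rfl) hk
      have : 0 ≤ η - η ^ 2 / 2 := by nlinarith
      gcongr
    norm_num1 at *
    linarith
  have h7 := Real.exp_le_exp.2 hkey
  rw [Real.exp_add, Real.exp_log two_pos, Real.exp_nat_mul, Real.exp_log (by linarith)] at h7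
  rw [e1, Real.exp_add, hq, inv_pow]
  have h8 : 0 < (1 + η) ^ k := by positivity
  calc _ = Real.exp (μ / (1 + η)⁻¹) * ((2 * Real.exp (μ * (η * (1 + η)))) / (1 + η) ^ k) := by
        field_simp
    _ ≤ Real.exp (μ / (1 + η)⁻¹) * 1 := by
        gcongr
        exact (div_le_one h8).2 h7
    _ = _ := mul_one _

lemma pow_le_exp_neg_half {L : ℝ} {N : ℕ} (hL : 1 ≤ L) (hN : L ^ 4 + 2 * L ^ 2 ≤ N) :
    (L ^ 3 / (L ^ 3 + 1 / 2)) ^ N ≤ Real.exp (-L / 2) := by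
  have h3 : (1 : ℝ) ≤ L ^ 3 := one_le_pow₀ hL
  have h1 := Real.add_one_le_exp (-(1 / (2 * L ^ 3 + 1)))
  have e : L ^ 3 / (L ^ 3 + 1 / 2) = -(1 / (2 * L ^ 3 + 1)) + 1 := by field_simp; ring
  calc _ ≤ Real.exp (-(1 / (2 * L ^ 3 + 1))) ^ N := by
        gcongr; rw [e]; exact h1
    _ = Real.exp (-(N / (2 * L ^ 3 + 1))) := by
        rw [← Real.exp_nat_mul]; congr 1; ring
    _ ≤ _ := by
        refine Real.exp_le_exp.2 ?_
        rw [neg_div, neg_le_neg_iff, div_le_div_iff₀ two_pos (by positivity)]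
        nlinarith

lemma le_one_sub_mul_sq {L N : ℝ} (hL : 29.929 ≤ L) (hN : L ^ 4 ≤ N) :
    0.4329 / L ^ 3 ≤ 1 - L ^ 3 / (L ^ 3 + 1 / 2) * (1 + 1 / N) ^ 2 := by
  have hL0 : 0 < L := by linarith
  have h3 : (29.929 : ℝ) ^ 3 ≤ L ^ 3 := by gcongr
  have h4 : (29.929 : ℝ) ^ 4 ≤ L ^ 4 := by gcongr
  have h5 : 1 / N ≤ 1 / L ^ 4 := by gcongr
  have h6 : (1 + 1 / N) ^ 2 ≤ (1 + 1 / L ^ 4) ^ 2 := by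
    have : 0 ≤ 1 / N := one_div_nonneg.2 (by linarith [pow_pos hL0 4])
    gcongr
  calc 0.4329 / L ^ 3 ≤ 1 - L ^ 3 / (L ^ 3 + 1 / 2) * (1 + 1 / L ^ 4) ^ 2 := by
        have e : 1 - L ^ 3 / (L ^ 3 + 1 / 2) * (1 + 1 / L ^ 4) ^ 2
            = (1 - 4 / L - 2 / (L * L ^ 4)) / (2 * L ^ 3 + 1) := by
          field_simp; ring
        have h7 : 4 / L ≤ 4 / 29.929 := by gcongr
        have h8 : 2 / (L * L ^ 4) ≤ 2 / (29.929 * 29.929 ^ 4) := by gcongr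
        rw [e, div_le_div_iff₀ (by positivity) (by positivity)]
        have h9 : 0.8662 ≤ 1 - 4 / L - 2 / (L * L ^ 4) := by norm_num1 at h7 h8 ⊢; linarith
        have h10 : 0.8662 * L ^ 3 ≤ (1 - 4 / L - 2 / (L * L ^ 4)) * L ^ 3 := by gcongr
        norm_num1 at h3 h10 ⊢
        linarith
    _ ≤ _ := by gcongr

lemma main_term_le {L κ : ℝ} (hL : 29.929 ≤ L) (hκ : 0 ≤ κ)
    (hk : κ ≤ L ^ 4 + 2.05 * L ^ 2 + 1) :
    (κ + 1) * (κ + 2) / (2 * (L ^ 3) ^ 2) ≤ L ^ 2 / 2 + 2.06 := by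
  have hL0 : 0 < L := by linarith
  have hZ : (29.929 : ℝ) ^ 2 ≤ L ^ 2 := by gcongr
  have e4 : L ^ 4 = (L ^ 2) ^ 2 := by ring
  have e6 : (L ^ 3) ^ 2 = (L ^ 2) ^ 3 := by ring
  rw [e6, div_le_iff₀ (by positivity)]
  rw [e4] at hk
  generalize L ^ 2 = Z at hZ hk ⊢
  have hZ' : 895 ≤ Z := le_trans (by norm_num) hZ
  calc (κ + 1) * (κ + 2) ≤ (κ + 2) ^ 2 := by nlinarith
    _ ≤ (Z ^ 2 + 2.05 * Z + 3) ^ 2 := by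
        gcongr ?_ ^ 2
        linarith
    _ ≤ (Z / 2 + 2.06) * (2 * Z ^ 3) := by
        have h1 : 895 * Z ≤ Z * Z := by gcongr
        have h2 : 895 * Z ^ 2 ≤ Z * Z ^ 2 := by gcongr
        have e : (Z / 2 + 2.06) * (2 * Z ^ 3) - (Z ^ 2 + 2.05 * Z + 3) ^ 2
            = 0.02 * (Z * Z ^ 2) - 10.2025 * Z ^ 2 - 12.3 * Z - 9 := by ring
        rw [← sub_nonneg, e]
        norm_num1 at *
        nlinarith

lemma first_tail_le {L Θ d : ℝ} {k : ℕ} (hL : 29.929 ≤ L) (hΘ : 0 ≤ Θ)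
    (hk : L ^ 4 + 2.05 * L ^ 2 ≤ k) (hkL : (k + 3 : ℝ) ≤ 1.0024 * L ^ 4)
    (hE : Θ * (L ^ 5 * Real.exp (-L / 2)) ≤ 0.676) (hd : 0.4329 / L ^ 3 ≤ d) :
    (k + 3 : ℝ) ^ 2 * (Θ / (L ^ 3) ^ 2) * (L ^ 3 / (L ^ 3 + 1 / 2)) ^ (k + 3) / d ≤ 1.6 := by
  have hL0 : 0 < L := by linarith
  have hp := pow_le_exp_neg_half (L := L) (N := k + 3) (by linarith)
    (by push_cast; nlinarith)
  calc _ ≤ (1.0024 * L ^ 4) ^ 2 * (Θ / (L ^ 3) ^ 2) * Real.exp (-L / 2) / (0.4329 / L ^ 3) := by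
        gcongr
    _ = 1.0024 ^ 2 / 0.4329 * (Θ * (L ^ 5 * Real.exp (-L / 2))) := by field_simp
    _ ≤ 1.0024 ^ 2 / 0.4329 * 0.676 := by gcongr
    _ ≤ _ := by norm_num

lemma second_tail_le {L Θ d : ℝ} {k : ℕ} (hL : 29.929 ≤ L) (hΘ : 0 ≤ Θ)
    (hk : L ^ 4 + 2.05 * L ^ 2 ≤ k) (hkL : (k + 3 : ℝ) ≤ 1.0024 * L ^ 4)
    (hE : Θ * (L ^ 5 * Real.exp (-L / 2)) ≤ 0.676) (hd : 0.68 / L ^ 2 ≤ d) :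
    (k + 2 : ℝ) ^ 2 * (Θ / (L ^ 3) ^ 2) * (L ^ 3 / (L ^ 3 + 1 / 2)) ^ (k + 2) / d ≤ 0.04 := by
  have hL0 : 0 < L := by linarith
  have hp := pow_le_exp_neg_half (L := L) (N := k + 2) (by linarith)
    (by push_cast; nlinarith)
  have hkL' : (k + 2 : ℝ) ≤ 1.0024 * L ^ 4 := by linarith
  have hi : 1 / L ≤ 1 / 29.929 := by gcongr
  calc _ ≤ (1.0024 * L ^ 4) ^ 2 * (Θ / (L ^ 3) ^ 2) * Real.exp (-L / 2) / (0.68 / L ^ 2) := by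
        gcongr
    _ = 1.0024 ^ 2 / 0.68 * (Θ * (L ^ 5 * Real.exp (-L / 2))) * (1 / L) := by field_simp
    _ ≤ 1.0024 ^ 2 / 0.68 * 0.676 * (1 / 29.929) := by gcongr
    _ ≤ _ := by norm_num

/-- Assuming RH, for `x ≥ 10^13` we have `∑_{n ≤ x} Λ(n)²/n ≤ (log x)²/2 + 4.5222`. -/
theorem sum_vonMangoldt_sq_div_le (hRH : RiemannHypothesis) (x : ℝ)
    (hx : (10 : ℝ) ^ (13 : ℕ) ≤ x) :
    ∑ n ∈ Finset.Iic ⌊x⌋₊, Λ n ^ 2 / (n : ℝ) ≤ Real.log x ^ 2 / 2 + 4.5222 := by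
  obtain ⟨hℓ1, hℓ2⟩ := thirteen_mul_log_ten_mem
  have hℓe := exp_neg_half_thirteen_mul_log_ten_le
  have hℓL : 13 * Real.log 10 ≤ Real.log x := by
    have h := Real.log_le_log (by norm_num) hx
    rwa [Real.log_pow, Nat.cast_ofNat] at h
  have hx1 : 1 ≤ x := le_trans (by norm_num) hx
  have hfloor : 64 ≤ ⌊x⌋₊ := Nat.le_floor (le_trans (by norm_num) hx)
  set L := Real.log x with hLdef
  set ℓ := 13 * Real.log 10
  obtain ⟨y, hyL⟩ : ∃ y, L = ℓ * y := ⟨L / ℓ, by field_simp⟩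
  have hy : 1 ≤ y := by
    by_contra! h
    nlinarith
  have hL : 29.929 ≤ L := hℓ1.trans hℓL
  have hL0 : 0 < L := by linarith
  have hL2 : (29.929 : ℝ) ^ 2 ≤ L ^ 2 := by gcongr
  have hL3 : (29.929 : ℝ) ^ 3 ≤ L ^ 3 := by gcongr
  have hΘ := coeffBound_le hy (by rw [hyL]; gcongr) (by rw [hyL]; gcongr : L ≤ 29.935 * y)
  set Θ := 4 * meanBound (L ^ 3) + 20 / L ^ 3
  have hΘ0 : 0 ≤ Θ := by
    have : 0 ≤ meanBound (L ^ 3) := by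
      rw [meanBound]
      have : 0 ≤ Real.log (1 + √(1 + L ^ 3)) := Real.log_nonneg (by simp)
      positivity
    positivity
  obtain ⟨P, K, hP, hK, hα, hb⟩ := exists_coeff_vonMangoldt hRH (σ := L ^ 3)
    (by norm_num1 at hL3 ⊢; linarith)
  obtain ⟨k, hk1, hk2⟩ : ∃ k : ℕ, L ^ 4 + 2.05 * L ^ 2 ≤ k ∧ k ≤ L ^ 4 + 2.05 * L ^ 2 + 1 :=
    ⟨_, Nat.le_ceil _, (Nat.ceil_lt_add_one (by positivity)).le⟩
  set η := 7 / (10 * L ^ 2) with hη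
  have hη0 : 0 < η := by positivity
  have hη1 : η ≤ 0.001 := by
    rw [hη, div_le_iff₀ (by positivity)]
    norm_num1 at hL2 ⊢
    linarith
  have hq0 : 0 < (1 + η)⁻¹ := by positivity
  have hq1 : (1 + η)⁻¹ < 1 := inv_lt_one_of_one_lt₀ (by linarith)
  have hratio : 0.68 / L ^ 2 ≤ 1 - (1 + η)⁻¹ / (L ^ 3 / (L ^ 3 + 1 / 2)) := by
    have e : 1 - (1 + η)⁻¹ / (L ^ 3 / (L ^ 3 + 1 / 2)) = (0.7 - 1 / (2 * L)) / L ^ 2 / (1 + η) := by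
      rw [hη]; field_simp; ring
    have h1 : 1 / (2 * L) ≤ 1 / (2 * 29.929) := by gcongr
    rw [e, le_div_iff₀ (by linarith), div_mul_eq_mul_div]
    gcongr
    norm_num1 at h1 hη1 ⊢
    linarith
  have hqt : (1 + η)⁻¹ < L ^ 3 / (L ^ 3 + 1 / 2) := by
    have h1 : 0 < 0.68 / L ^ 2 := by positivity
    rw [← div_lt_one (by positivity)]
    linarith
  have hk3 : L ^ 4 ≤ k + 3 := by nlinarith
  have hden := le_one_sub_mul_sq hL hk3
  have h1 : 0 < 0.4329 / L ^ 3 := by positivity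
  have hS := sum_vonMangoldt_mul_log_div_le hx1 (σ := L ^ 3) (by positivity) hq0 hq1 hqt hΘ0
    (fun μ _ hμ ↦ majorant_condition (by linarith) rfl hk1 hμ) hP hα hb (by linarith)
  have hG := sum_vonMangoldt_sq_div_le_sub hfloor
  have hE : Real.exp (-L / 2) * L ^ 5 * y ≤ 7.61 := by
    have h := pow_mul_exp_neg_half_le hℓ1 hy
    calc Real.exp (-L / 2) * L ^ 5 * y = ℓ ^ 5 * (y ^ 6 * Real.exp (-(ℓ * y) / 2)) := by
          rw [hyL]; ring
      _ ≤ 29.935 ^ 5 * 0.00000031623 := by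
          gcongr
          exact h.trans hℓe
      _ ≤ _ := by norm_num
  have hkL : (k + 3 : ℝ) ≤ 1.0024 * L ^ 4 := by
    have : L ^ 4 = L ^ 2 * L ^ 2 := by ring
    norm_num1 at *
    nlinarith
  have hmain : (k + 1 : ℝ) * (k + 2) / (2 * (L ^ 3) ^ 2) ≤ L ^ 2 / 2 + 2.06 :=
    main_term_le hL k.cast_nonneg hk2
  have hEΘ : Θ * (L ^ 5 * Real.exp (-L / 2)) ≤ 0.676 := by
    calc Θ * (L ^ 5 * Real.exp (-L / 2)) ≤ 0.0887 * y * (L ^ 5 * Real.exp (-L / 2)) := by gcongr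
      _ = 0.0887 * (Real.exp (-L / 2) * L ^ 5 * y) := by ring
      _ ≤ 0.0887 * 7.61 := by gcongr
      _ ≤ _ := by norm_num
  have htail1 := first_tail_le hL hΘ0 hk1 hkL hEΘ hden
  have htail2 := second_tail_le hL hΘ0 hk1 hkL hEΘ hratio
  have hlog2 : 0.6931 ^ 2 ≤ Real.log 2 ^ 2 := by
    gcongr
    have := Real.log_two_gt_d9
    norm_num1 at *
    linarith
  norm_num1 at hmain htail1 htail2 hlog2 hK ⊢
  linarith
end
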